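/- arXiv:2211.12114 — 8 statements merged into one kernel-verified Lean document; each statement's English description precedes it below -/
import Mathlib

section
/- Let p be a prime, let v be an integer with 0 ≤ v ≤ p−1, let t ≥ 0 be a natural number, and let x be a positive integer divisible by p^t. Then |C(x+v, v) − 1 − H_v·x|_p ≤ p^{−2t}, where C(x+v, v) is the usual binomial coefficient viewed in ℚ and |·|_p is the p-adic absolute value on ℚ. -/
/-!
Since `C(x + v, v) = ∏_{i=1}^v (1 + x / i)`, the quantity to bound is the part of degree at least
two in `x` of this product. For `i < p` each `x / i` is as small as `x`, so by the ultrametric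
inequality every term of that part has norm at most `p^{-2t}`.
-/

theorem norm_prod_one_add_sub_one_sub_sum_le_sq {ι R : Type*} [SeminormedCommRing R]
    [IsUltrametricDist R] {s : Finset ι} {a : ι → R} {r : ℝ} (hr : r ≤ 1)
    (ha : ∀ i ∈ s, ‖a i‖ ≤ r) :
    ‖∏ i ∈ s, (1 + a i) - 1 - ∑ i ∈ s, a i‖ ≤ r ^ 2 := by
  classical
  induction s using Finset.induction_on with
  | empty => simpa using sq_nonneg r
  | insert j s hj ih =>
    rw [Finset.forall_mem_insert] at ha
    obtain ⟨haj, has⟩ := ha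
    have hr₀ : 0 ≤ r := (norm_nonneg _).trans haj
    set S := ∑ i ∈ s, a i
    set E := ∏ i ∈ s, (1 + a i) - 1 - S with hE
    have hS : ‖S‖ ≤ r := IsUltrametricDist.norm_sum_le_of_forall_le_of_nonneg hr₀ has
    have hEr : ‖E‖ ≤ r ^ 2 := ih has
    have hES : ‖E + S‖ ≤ r :=
      (IsUltrametricDist.norm_add_le_max _ _).trans
        (max_le (hEr.trans (pow_le_of_le_one hr₀ hr two_ne_zero)) hS)
    have hajES : ‖a j * (E + S)‖ ≤ r ^ 2 :=
      (norm_mul_le _ _).trans ((mul_le_mul haj hES (norm_nonneg _) hr₀).trans_eq (sq r).symm)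
    have expand : ∏ i ∈ insert j s, (1 + a i) - 1 - ∑ i ∈ insert j s, a i =
        E + a j * (E + S) := by
      rw [Finset.prod_insert hj, Finset.sum_insert hj, hE]
      ring
    rw [expand]
    exact (IsUltrametricDist.norm_add_le_max _ _).trans (max_le hEr hajES)

theorem ringChoose_add_natCast_eq_prod_one_add_div {K : Type*} [Field K] [CharZero K]
    (x : K) (n : ℕ) :
    Ring.choose (x + n) n = ∏ i ∈ Finset.range n, (1 + x / (i + 1 : ℕ)) := by
  induction n with
  | zero => simp
  | succ n ih =>
    have absorption : ((n + 1 : ℕ) : K) * Ring.choose (x + (n + 1 : ℕ)) (n + 1) =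
        (x + (n + 1 : ℕ)) * Ring.choose (x + n) n := by
      simpa [add_assoc] using Ring.choose_add_smul_choose (x + n) n 1
    have hn : ((n + 1 : ℕ) : K) ≠ 0 := Nat.cast_ne_zero.mpr n.succ_ne_zero
    rw [Finset.prod_range_succ, ← ih]
    apply mul_left_cancel₀ hn
    rw [absorption]
    field_simp
    ring

theorem zigzag_stmt_2_general {p : ℕ} [Fact p.Prime] {v : ℕ} (hv : v < p) {t : ℕ} {x : ℚ_[p]}
    (hx : ‖x‖ ≤ (p : ℝ) ^ (-t : ℤ)) :
    ‖Ring.choose (x + v) v - 1 - (harmonic v : ℚ_[p]) * x‖ ≤ (p : ℝ) ^ (-(2 * t : ℤ)) := by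
  have hp : (1 : ℝ) ≤ p := mod_cast (Fact.out : p.Prime).one_le
  have hxi : ∀ i ∈ Finset.range v, ‖x / (i + 1 : ℕ)‖ ≤ (p : ℝ) ^ (-t : ℤ) := by
    intro i hi
    have hip : i + 1 < p := (Nat.succ_le_of_lt (Finset.mem_range.mp hi)).trans_lt hv
    have hunit : ‖((i + 1 : ℕ) : ℚ_[p])‖ = 1 :=
      Padic.norm_natCast_eq_one_iff.mpr (Nat.coprime_of_lt_prime i.succ_ne_zero hip Fact.out)
    rwa [norm_div, hunit, div_one]
  have hHx : (harmonic v : ℚ_[p]) * x = ∑ i ∈ Finset.range v, x / (i + 1 : ℕ) := by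
    simp [harmonic, Finset.sum_mul, div_eq_inv_mul]
  have hsq : (p : ℝ) ^ (-(2 * t : ℤ)) = ((p : ℝ) ^ (-t : ℤ)) ^ 2 := by
    rw [← zpow_natCast, ← zpow_mul]
    ring_nf
  rw [ringChoose_add_natCast_eq_prod_one_add_div, hHx, hsq]
  exact norm_prod_one_add_sub_one_sub_sum_le_sq (zpow_le_one_of_nonpos₀ hp (by simp)) hxi

/-- Let `p` be a prime, `0 ≤ v ≤ p−1`, `t ≥ 0`, and let `x` be a positive integer divisible
by `p^t`. Then `|C(x+v, v) − 1 − H_v·x|_p ≤ p^{−2t}`, where `H_v = ∑_{i=1}^v 1/i` and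
`|·|_p` is the `p`-adic absolute value on `ℚ` (with `|p|_p = 1/p`). -/
theorem zigzag_stmt_2 (p : ℕ) (hp : p.Prime) (v : ℕ) (hv : v ≤ p - 1)
    (t : ℕ) (x : ℕ) (hx : 0 < x) (hdvd : p ^ t ∣ x) :
    padicNorm p (((x + v).choose v : ℚ) - 1 -
        (∑ i ∈ Finset.Icc 1 v, (1 / (i : ℚ))) * (x : ℚ)) ≤ (p : ℚ) ^ (-(2 * t : ℤ)) := by
  have : Fact p.Prime := ⟨hp⟩
  have hxt : ‖(x : ℚ_[p])‖ ≤ (p : ℝ) ^ (-t : ℤ) :=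
    mod_cast (Padic.norm_int_le_pow_iff_dvd x t).mpr (mod_cast hdvd)
  rw [← Rat.cast_le (K := ℝ), ← Padic.eq_padicNorm]
  simpa [harmonic_eq_sum_Icc, ← Nat.cast_add, Ring.choose_natCast]
    using zigzag_stmt_2_general (Nat.lt_of_le_pred hp.pos hv) hxt
end

section
/- Let p be a prime, let v₋, v₊ be integers with 0 ≤ v₋, v₊ ≤ p−1, let t ≥ 0 be a natural number, and let x be a positive integer divisible by p^t. Then |C(x+v₊, v₊)·C(x+v₋, v₋) − 1 − (H_{v₋} + H_{v₊})·x|_p ≤ p^{−2t}, where the binomial coefficients are viewed in ℚ and |·|_p is the p-adic absolute value on ℚ. -/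
/-!
Since `C(x + v, v) = ∏_{i = 1}^v (1 + x / i)`, the product of the two binomial coefficients is a
single product of factors `1 + y`, with `y` running over the `x / i` for `1 ≤ i ≤ v₊` and for
`1 ≤ i ≤ v₋`. As `i < p` is a `p`-adic unit, `|y| = |x| ≤ 1`, so by the ultrametric inequality
every term of degree at least two in the expansion of the product has norm at most `|x|²`; the
terms of degree zero and one are `1` and `(H_{v₋} + H_{v₊}) x`.
-/

open Finset

theorem norm_prod_one_add_sub_one_sub_sum_le {ι R : Type*} [SeminormedCommRing R]
    [IsUltrametricDist R] {s : Finset ι} {f : ι → R} {r : ℝ} (hr : r ≤ 1)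
    (hf : ∀ i ∈ s, ‖f i‖ ≤ r) :
    ‖∏ i ∈ s, (1 + f i) - 1 - ∑ i ∈ s, f i‖ ≤ r ^ 2 := by
  classical
  induction s using Finset.induction_on with
  | empty => simpa using sq_nonneg r
  | insert a s ha ih =>
    obtain ⟨hfa, hfs⟩ := (forall_mem_insert ..).1 hf
    have hr₀ : 0 ≤ r := (norm_nonneg _).trans hfa
    have hrem := ih hfs
    have hsum : ‖∑ i ∈ s, f i‖ ≤ r :=
      IsUltrametricDist.norm_sum_le_of_forall_le_of_nonneg hr₀ hfs
    have hprod : ‖∏ i ∈ s, (1 + f i) - 1‖ ≤ r := by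
      rw [← sub_add_cancel (∏ i ∈ s, (1 + f i) - 1) (∑ i ∈ s, f i)]
      exact (IsUltrametricDist.norm_add_le_max _ _).trans
        (max_le (hrem.trans (pow_le_of_le_one hr₀ hr two_ne_zero)) hsum)
    have hcross : ‖f a * (∏ i ∈ s, (1 + f i) - 1)‖ ≤ r ^ 2 :=
      (norm_mul_le_of_le hfa hprod).trans_eq (sq r).symm
    rw [prod_insert ha, sum_insert ha]
    calc
      _ = ‖(∏ i ∈ s, (1 + f i) - 1 - ∑ i ∈ s, f i) + f a * (∏ i ∈ s, (1 + f i) - 1)‖ := by ring_nf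
      _ ≤ r ^ 2 := (IsUltrametricDist.norm_add_le_max _ _).trans (max_le hrem hcross)

theorem choose_add_natCast_eq_prod_one_add_div {K : Type*} [Field K] [CharZero K] (x : K) (n : ℕ) :
    Ring.choose (x + n) n = ∏ i ∈ Icc 1 n, (1 + x / i) := by
  induction n with
  | zero => simp
  | succ n ih =>
    have hn : (n + 1 : K) ≠ 0 := n.cast_add_one_ne_zero
    have hstep : (n + 1 : K) * Ring.choose (x + (n + 1 : ℕ)) (n + 1) =
        (x + (n + 1)) * Ring.choose (x + n) n := by
      simpa [← add_assoc] using
        Ring.choose_smul_choose (x + (n + 1 : ℕ)) (Nat.le_add_left 1 n)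
    rw [prod_Icc_succ_top (Nat.le_add_left 1 n), ← ih, ← mul_right_inj' hn, hstep]
    push_cast
    field_simp
    ring

theorem norm_choose_add_mul_choose_add_sub_le {K : Type*} [NormedField K] [CharZero K]
    [IsUltrametricDist K] {m n : ℕ} (hm : ∀ i ∈ Icc 1 m, ‖(i : K)‖ = 1)
    (hn : ∀ i ∈ Icc 1 n, ‖(i : K)‖ = 1) {x : K} (hx : ‖x‖ ≤ 1) :
    ‖Ring.choose (x + n) n * Ring.choose (x + m) m - 1 -
      (∑ i ∈ Icc 1 m, 1 / (i : K) + ∑ i ∈ Icc 1 n, 1 / (i : K)) * x‖ ≤ ‖x‖ ^ 2 := by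
  have hf : ∀ i ∈ (Icc 1 m).disjSum (Icc 1 n),
      ‖Sum.elim (fun i : ℕ ↦ x / i) (fun i : ℕ ↦ x / i) i‖ ≤ ‖x‖ := by
    rintro (i | i) hi
    · simp [hm i (inl_mem_disjSum.1 hi)]
    · simp [hn i (inr_mem_disjSum.1 hi)]
  have hbound := norm_prod_one_add_sub_one_sub_sum_le hx hf
  simp only [prod_disjSum, sum_disjSum, Sum.elim_inl, Sum.elim_inr] at hbound
  simpa only [choose_add_natCast_eq_prod_one_add_div, mul_comm (∏ _ ∈ Icc 1 n, _), add_mul,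
    sum_mul, one_div_mul_eq_div] using hbound

theorem padic_norm_natCast_eq_one_of_mem_Icc {p : ℕ} [Fact p.Prime] {v : ℕ} (hv : v ≤ p - 1)
    (i : ℕ) (hi : i ∈ Icc 1 v) : ‖(i : ℚ_[p])‖ = 1 := by
  obtain ⟨hi₁, hiv⟩ := mem_Icc.1 hi
  exact Padic.norm_natCast_eq_one_iff.2
    (Nat.coprime_of_lt_prime (by omega) (by omega) Fact.out)

theorem zigzag_stmt_3_general (p : ℕ) [Fact p.Prime] (vminus vplus : ℕ)
    (hvminus : vminus ≤ p - 1) (hvplus : vplus ≤ p - 1)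
    (t : ℕ) (x : ℚ_[p]) (hx : ‖x‖ ≤ (p : ℝ) ^ (-t : ℤ)) :
    ‖Ring.choose (x + vplus) vplus * Ring.choose (x + vminus) vminus - 1 -
        ((∑ i ∈ Icc 1 vminus, 1 / (i : ℚ_[p])) + ∑ i ∈ Icc 1 vplus, 1 / (i : ℚ_[p])) * x‖ ≤
      (p : ℝ) ^ (-(2 * t : ℤ)) := by
  have hp : (1 : ℝ) ≤ p := mod_cast (Fact.out : p.Prime).one_le
  have hx₁ : ‖x‖ ≤ 1 := hx.trans (zpow_le_one_of_nonpos₀ hp (by simp))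
  calc
    _ ≤ ‖x‖ ^ 2 := norm_choose_add_mul_choose_add_sub_le
      (padic_norm_natCast_eq_one_of_mem_Icc hvminus)
      (padic_norm_natCast_eq_one_of_mem_Icc hvplus) hx₁
    _ ≤ ((p : ℝ) ^ (-t : ℤ)) ^ 2 := by gcongr
    _ = (p : ℝ) ^ (-(2 * t : ℤ)) := by rw [← zpow_natCast, ← zpow_mul]; congr 1; push_cast; ring

/-- Let `p` be a prime, `0 ≤ v₋, v₊ ≤ p−1`, `t ≥ 0`, and let `x` be a positive integer
divisible by `p^t`. Then `|C(x+v₊, v₊)·C(x+v₋, v₋) − 1 − (H_{v₋} + H_{v₊})·x|_p ≤ p^{−2t}`,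
where `H_v = ∑_{i=1}^v 1/i` and `|·|_p` is the `p`-adic absolute value (with `|p|_p = 1/p`). -/
theorem zigzag_stmt_3 (p : ℕ) (hp : p.Prime) (vminus vplus : ℕ)
    (hvminus : vminus ≤ p - 1) (hvplus : vplus ≤ p - 1)
    (t : ℕ) (x : ℕ) (hx : 0 < x) (hdvd : p ^ t ∣ x) :
    padicNorm p (((x + vplus).choose vplus : ℚ) * ((x + vminus).choose vminus : ℚ) - 1 -
        ((∑ i ∈ Finset.Icc 1 vminus, (1 / (i : ℚ))) +
          ∑ i ∈ Finset.Icc 1 vplus, (1 / (i : ℚ))) * (x : ℚ)) ≤ (p : ℚ) ^ (-(2 * t : ℤ)) := by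
  have : Fact p.Prime := ⟨hp⟩
  rw [← Rat.cast_le (K := ℝ), ← Padic.eq_padicNorm]
  simpa [← Nat.cast_add, Ring.choose_natCast] using zigzag_stmt_3_general p vminus vplus hvminus
    hvplus t x (mod_cast (Padic.norm_int_le_pow_iff_dvd x t).2 (mod_cast hdvd))
end

section
/- Let p be a prime and let K be a characteristic-zero field with a multiplicative nonarchimedean norm ‖·‖ such that ‖q‖ equals the p-adic absolute value of q for every rational number q (viewed in K). Let k₀ be an integer, let (k_n) be a sequence of integers with k_n > k₀ for all n and v_p(k_n − k₀) → ∞. Let α, α' ∈ K with α ≠ 0, let C ≥ 0 be a real constant, and let (a_n), (y_n) be sequences in K such that for all n: ‖a_n − α − α'·(k_n − k₀)‖ ≤ C·‖(k_n − k₀ : K)‖², y_n² − a_n·y_n + p^{k_n − 1} = 0, and ‖y_n‖ = ‖a_n‖. Then (y_n − α)/(k_n − k₀) → α' in K. -/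
/-!
The roots of `x² - a x + b` sum to `a` and multiply to `b`, so the root `y` differs from `a` by the
other root `b / y`. When `y` stays away from `0` this gives `y - a = O(b)`. Here `b = p ^ (k - 1)`
is exponentially small in the archimedean size of `k - k₀`, which is at least `p ^ v_p(k - k₀)`;
hence `b = o(k - k₀)` in `K`, and `y` inherits the first-order expansion of `a`.
-/

open Filter Asymptotics Topology

lemma isBigO_sub_of_quadratic_eq_zero {ι R : Type*} [NormedRing R] [NormMulClass R]
    {l : Filter ι} {a b y : ι → R} (hroot : ∀ᶠ i in l, y i ^ 2 - a i * y i + b i = 0)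
    (hy : (fun _ => (1 : R)) =O[l] y) :
    (fun i => y i - a i) =O[l] b := by
  have hprod : ∀ᶠ i in l, (y i - a i) * y i = -b i :=
    hroot.mono fun i hi => by rw [sub_mul, ← sq]; exact eq_neg_of_add_eq_zero_left hi
  simpa using ((isBigO_refl (fun i => y i - a i) l).mul hy).trans_eventuallyEq hprod

lemma isBigO_one_left_of_tendsto {ι R : Type*} [NormedRing R] {l : Filter ι} {a : ι → R} {α : R}
    (hα : α ≠ 0) (ha : Tendsto a l (𝓝 α)) : (fun _ => (1 : R)) =O[l] a :=
  (isBigO_const_const 1 hα l).trans ((isEquivalent_const_iff_tendsto hα).2 ha).isBigO_symm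

lemma isLittleO_of_norm_le_mul_norm_sq {ι E F : Type*} [SeminormedAddCommGroup E]
    [SeminormedAddCommGroup F] {l : Filter ι} {f : ι → E} {d : ι → F} {C : ℝ}
    (hf : ∀ᶠ i in l, ‖f i‖ ≤ C * ‖d i‖ ^ 2) (hd : Tendsto d l (𝓝 0)) : f =o[l] d :=
  have hsq : f =O[l] fun i => ‖d i‖ ^ 2 := IsBigO.of_bound C (by simpa using hf)
  hsq.trans_isLittleO ((isLittleO_norm_pow_id one_lt_two).comp_tendsto hd)

lemma tendsto_of_isLittleO_sub_linear {ι R : Type*} [NormedRing R] {l : Filter ι}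
    {a d : ι → R} {α α' : R} (ha : (fun i => a i - α - α' * d i) =o[l] d)
    (hd : Tendsto d l (𝓝 0)) : Tendsto a l (𝓝 α) := by
  simpa using ((ha.trans_tendsto hd).add (hd.const_mul α')).add_const α

lemma tendsto_div_of_isLittleO_sub_linear {ι K : Type*} [NormedDivisionRing K] {l : Filter ι}
    {y d : ι → K} {α α' : K} (hy : (fun i => y i - α - α' * d i) =o[l] d)
    (hd : ∀ᶠ i in l, d i ≠ 0) : Tendsto (fun i => (y i - α) / d i) l (𝓝 α') := by
  rw [← tendsto_sub_nhds_zero_iff]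
  refine hy.tendsto_div_nhds_zero.congr' (hd.mono fun i hi => ?_)
  rw [sub_div, mul_div_cancel_right₀ _ hi]

lemma two_mul_le_two_pow (n : ℕ) : 2 * n ≤ 2 ^ n := by
  cases n with
  | zero => simp
  | succ n => rw [pow_succ']; exact Nat.mul_le_mul_left 2 n.lt_two_pow_self

lemma two_mul_padicValInt_le {p : ℕ} (hp : 2 ≤ p) {m : ℤ} (hm : 0 < m) :
    2 * (padicValInt p m : ℤ) ≤ m :=
  calc 2 * (padicValInt p m : ℤ) ≤ 2 ^ padicValInt p m := mod_cast two_mul_le_two_pow _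
    _ ≤ (p : ℤ) ^ padicValInt p m := by gcongr; exact_mod_cast hp
    _ ≤ m := Int.le_of_dvd hm (padicValInt_dvd m)

section PadicCompatibleNorm

variable {p : ℕ} {K : Type*} [NormedDivisionRing K]
  (hcompat : ∀ q : ℚ, ‖(q : K)‖ = ((padicNorm p q : ℚ) : ℝ))

include hcompat

lemma norm_natCast_prime_of_padic (hp : p.Prime) : ‖(p : K)‖ = (p : ℝ)⁻¹ := by
  simpa [padicNorm.padicNorm_p hp.one_lt] using hcompat p

lemma norm_intCast_of_padic {m : ℤ} (hm : m ≠ 0) :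
    ‖(m : K)‖ = (p : ℝ) ^ (-padicValInt p m : ℤ) := by
  simpa [padicNorm.eq_zpow_of_nonzero (Int.cast_ne_zero.2 hm)] using hcompat m

lemma intCast_ne_zero_of_padic (hp : p.Prime) {m : ℤ} (hm : m ≠ 0) : (m : K) ≠ 0 := by
  rw [← norm_ne_zero_iff, norm_intCast_of_padic hcompat hm]
  exact zpow_ne_zero _ (Nat.cast_ne_zero.2 hp.ne_zero)

lemma norm_prime_zpow_le_norm_intCast_sq (hp : p.Prime) {m : ℤ} (hm : 0 < m) :
    ‖(p : K) ^ m‖ ≤ ‖(m : K)‖ ^ 2 := by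
  have hexp : -m ≤ -padicValInt p m * (2 : ℕ) := by
    have := two_mul_padicValInt_le hp.two_le hm
    push_cast
    linarith
  rw [norm_zpow, norm_natCast_prime_of_padic hcompat hp, norm_intCast_of_padic hcompat hm.ne',
    inv_zpow', ← zpow_natCast, ← zpow_mul]
  exact zpow_le_zpow_right₀ (mod_cast hp.one_le) hexp

variable {ι : Type*} {l : Filter ι}

lemma tendsto_intCast_zero_of_padicValInt (hp : p.Prime) {m : ι → ℤ}
    (hval : Tendsto (fun i => padicValInt p (m i)) l atTop) :
    Tendsto (fun i => (m i : K)) l (𝓝 0) := by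
  have hp1 : (1 : ℝ) < p := mod_cast hp.one_lt
  have hbound (i : ι) : ‖(m i : K)‖ ≤ (p : ℝ)⁻¹ ^ padicValInt p (m i) := by
    rcases eq_or_ne (m i) 0 with hm | hm
    · simp [hm]
    · rw [norm_intCast_of_padic hcompat hm, zpow_neg, zpow_natCast, inv_pow]
  exact squeeze_zero_norm hbound
    ((tendsto_pow_atTop_nhds_zero_of_lt_one (by positivity) (inv_lt_one_of_one_lt₀ hp1)).comp hval)

lemma isLittleO_prime_zpow (hp : p.Prime) {k₀ : ℤ} {k : ι → ℤ} (hk : ∀ᶠ i in l, k₀ < k i)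
    (hval : Tendsto (fun i => padicValInt p (k i - k₀)) l atTop) (c : ℤ) :
    (fun i => (p : K) ^ (k i - c)) =o[l] fun i => ((k i - k₀ : ℤ) : K) := by
  have hp0 : (p : K) ≠ 0 := by
    simpa using intCast_ne_zero_of_padic hcompat hp (Int.natCast_ne_zero.2 hp.ne_zero)
  have hlin : (fun i => (p : K) ^ (k i - k₀)) =o[l] fun i => ((k i - k₀ : ℤ) : K) :=
    isLittleO_of_norm_le_mul_norm_sq (C := 1)
      (hk.mono fun i hi => by
        simpa only [one_mul] using norm_prime_zpow_le_norm_intCast_sq hcompat hp (sub_pos.2 hi))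
      (tendsto_intCast_zero_of_padicValInt hcompat hp hval)
  refine (hlin.const_mul_left ((p : K) ^ (k₀ - c))).congr_left fun i => ?_
  rw [← zpow_add₀ hp0]
  congr 1
  ring

end PadicCompatibleNorm

theorem zigzag_stmt_6_general {p : ℕ} (hp : p.Prime) {K : Type*} [NormedDivisionRing K]
    (hcompat : ∀ q : ℚ, ‖(q : K)‖ = ((padicNorm p q : ℚ) : ℝ))
    {ι : Type*} {l : Filter ι} {k₀ : ℤ} {k : ι → ℤ} (hk : ∀ᶠ i in l, k₀ < k i)
    (hval : Tendsto (fun i => padicValInt p (k i - k₀)) l atTop)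
    {α α' : K} {a y : ι → K}
    (hTaylor : (fun i => a i - α - α' * ((k i - k₀ : ℤ) : K)) =o[l]
      fun i => ((k i - k₀ : ℤ) : K))
    (heq : ∀ᶠ i in l, y i ^ 2 - a i * y i + (p : K) ^ (k i - 1) = 0)
    (hy : (fun _ => (1 : K)) =O[l] y) :
    Tendsto (fun i => (y i - α) / ((k i - k₀ : ℤ) : K)) l (𝓝 α') := by
  have hroot : (fun i => y i - a i) =o[l] fun i => ((k i - k₀ : ℤ) : K) :=
    (isBigO_sub_of_quadratic_eq_zero heq hy).trans_isLittleO
      (isLittleO_prime_zpow hcompat hp hk hval 1)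
  refine tendsto_div_of_isLittleO_sub_linear ((hroot.add hTaylor).congr_left fun i => by abel) ?_
  exact hk.mono fun i hi => intCast_ne_zero_of_padic hcompat hp (sub_pos.2 hi).ne'

/-- Differentiability of the unit root: let `p` be a prime and `K` a characteristic-zero
field with a multiplicative nonarchimedean norm restricting to the `p`-adic absolute value
on `ℚ`. Let `kₙ > k₀` be integers with `v_p(kₙ − k₀) → ∞`, let `α ≠ 0`, and suppose
`‖aₙ − α − α'(kₙ − k₀)‖ ≤ C‖kₙ − k₀‖²`, `yₙ² − aₙyₙ + p^{kₙ−1} = 0` and `‖yₙ‖ = ‖aₙ‖`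
for all `n`. Then `(yₙ − α)/(kₙ − k₀) → α'`. -/
theorem zigzag_stmt_6 (p : ℕ) (hp : p.Prime)
    {K : Type*} [NormedField K] [CharZero K] [IsUltrametricDist K]
    (hcompat : ∀ q : ℚ, ‖(q : K)‖ = ((padicNorm p q : ℚ) : ℝ))
    (k₀ : ℤ) (k : ℕ → ℤ) (hk : ∀ n, k₀ < k n)
    (hval : Filter.Tendsto (fun n => padicValInt p (k n - k₀)) Filter.atTop Filter.atTop)
    (α α' : K) (hα : α ≠ 0) (C : ℝ) (hC : 0 ≤ C)
    (a y : ℕ → K)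
    (hTaylor : ∀ n, ‖a n - α - α' * ((k n - k₀ : ℤ) : K)‖ ≤ C * ‖((k n - k₀ : ℤ) : K)‖ ^ 2)
    (heq : ∀ n, (y n) ^ 2 - a n * y n + (p : K) ^ (k n - 1) = 0)
    (hnorm : ∀ n, ‖y n‖ = ‖a n‖) :
    Filter.Tendsto (fun n => (y n - α) / ((k n - k₀ : ℤ) : K)) Filter.atTop (nhds α') := by
  have hd := tendsto_intCast_zero_of_padicValInt hcompat hp hval
  have hlin := isLittleO_of_norm_le_mul_norm_sq (.of_forall hTaylor) hd
  have ha := isBigO_one_left_of_tendsto hα (tendsto_of_isLittleO_sub_linear hlin hd)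
  have hy := ha.trans (isBigO_of_le _ fun n => (hnorm n).ge)
  exact zigzag_stmt_6_general hp hcompat (.of_forall hk) hval hlin (.of_forall heq) hy
end

section
/- Let p be an odd prime. The series ∑_{j=1}^{∞} (−1)^{j+1}·p^j/j converges in ℚ_p; call its sum ℒ. Then for every integer k₀ ≥ 1 and every sequence of integers (k_n) with k_n > k₀ for all n and v_p(k_n − k₀) → ∞, one has ((1+p)^{k_n − 1} − (1+p)^{k₀ − 1})/(k_n − k₀) → (1+p)^{k₀ − 1}·ℒ in ℚ_p. -/
/-!
For `‖x‖ < 1` the function `n ↦ (1 + x) ^ n` extends to a continuous additive character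
`κ s = ∑ i, Ring.choose s i • x ^ i` of `ℤ_[p]`. Since
`(i + 1) * choose s (i + 1) = s * choose (s - 1) i`, we have `κ s - 1 = s • F (s - 1)`, where
`F s = ∑ i, choose s i • (x ^ (i + 1) / (i + 1))` is again a convergent Mahler series, hence
continuous. So `κ` has derivative `F (-1)` at `0`, and `choose (-1) i = (-1) ^ i` identifies
`F (-1)` with the logarithm series of `1 + x`.
-/

open Filter Topology

theorem succ_mul_ringChoose_succ {R : Type*} [CommRing R] [BinomialRing R] (r : R) (i : ℕ) :
    ((i + 1 : ℕ) : R) * Ring.choose r (i + 1) = r * Ring.choose (r - 1) i := by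
  simpa [Nat.choose_one_right] using Ring.choose_smul_choose r (Nat.le_add_left 1 i)

theorem ringChoose_neg_one {R : Type*} [CommRing R] [BinomialRing R] (i : ℕ) :
    Ring.choose (-1 : R) i = (-1) ^ i := by
  simp [Ring.choose_neg', Ring.multichoose_one, Int.negOnePow_def, Units.smul_def]

theorem norm_natCast_inv_le (p : ℕ) [Fact p.Prime] {K : Type*} [NormedField K]
    [NormedAlgebra ℚ_[p] K] (n : ℕ) : ‖(n : K)⁻¹‖ ≤ n := by
  rcases eq_or_ne n 0 with rfl | hn
  · simp
  rw [← map_natCast (algebraMap ℚ_[p] K), ← map_inv₀, norm_algebraMap', norm_inv,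
    Padic.norm_eq_zpow_neg_valuation (mod_cast hn), Padic.valuation_natCast, zpow_neg, inv_inv,
    zpow_natCast]
  exact_mod_cast Nat.le_of_dvd (Nat.pos_of_ne_zero hn) pow_padicValNat_dvd

theorem tendsto_pow_div_natCast_zero (p : ℕ) [Fact p.Prime] {K : Type*} [NormedField K]
    [NormedAlgebra ℚ_[p] K] {x : K} (hx : ‖x‖ < 1) :
    Tendsto (fun n : ℕ => x ^ n / n) atTop (𝓝 0) := by
  refine squeeze_zero_norm (fun n => ?_)
    (tendsto_self_mul_const_pow_of_lt_one (norm_nonneg x) hx)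
  rw [div_eq_mul_inv, mul_comm, norm_mul, norm_pow]
  gcongr
  exact norm_natCast_inv_le p n

section

variable {p : ℕ} [Fact p.Prime]

theorem tendsto_intCast_nhdsNE_zero {ι : Type*} {l : Filter ι} {z : ι → ℤ}
    (hz : Tendsto (fun i => padicValInt p (z i)) l atTop) :
    Tendsto (fun i => (z i : ℤ_[p])) l (𝓝[≠] 0) := by
  have hp : (p : ℝ)⁻¹ < 1 := inv_lt_one_of_one_lt₀ (mod_cast (Fact.out : p.Prime).one_lt)
  refine tendsto_nhdsWithin_iff.2 ⟨?_, ?_⟩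
  · refine squeeze_zero_norm (fun i => ?_)
      ((tendsto_pow_atTop_nhds_zero_of_lt_one (by positivity) hp).comp hz)
    simpa using PadicInt.norm_int_le_pow_iff_dvd.2 (padicValInt_dvd (p := p) (z i))
  · filter_upwards [hz.eventually_gt_atTop 0] with i hi hi0
    simp [Int.cast_eq_zero.1 hi0] at hi

theorem hasSum_addChar {R : Type*} [NormedRing R] [Algebra ℤ_[p] R] [IsBoundedSMul ℤ_[p] R]
    [IsUltrametricDist R] [CompleteSpace R] {κ : AddChar ℤ_[p] R} (hκ : Continuous κ) (s : ℤ_[p]) :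
    HasSum (fun n => Ring.choose s n • (κ 1 - 1) ^ n) (κ s) := by
  have h := ContinuousMap.hasSum_apply (PadicInt.hasSum_mahler (⟨κ, hκ⟩ : C(ℤ_[p], R))) s
  simpa [PadicInt.mahlerTerm_apply, mahler_apply, fwdDiff_addChar_eq] using h

variable {K : Type*} [NormedField K] [Algebra ℤ_[p] K] [IsBoundedSMul ℤ_[p] K]

variable (p) in
/-- The divided difference `s ↦ ((1 + x) ^ (s + 1) - 1) / (s + 1)` on `ℤ_[p]`, encoded by its Mahler
series so that its value at `s = -1` is the derivative of `s ↦ (1 + x) ^ s` at `0`. It is meaningful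
for `‖x‖ < 1`, when the series converges. -/
noncomputable def powSlope (x : K) : C(ℤ_[p], K) :=
  PadicInt.mahlerSeries fun i => x ^ (i + 1) / (i + 1 : ℕ)

variable [NormedAlgebra ℚ_[p] K] [CompleteSpace K] [IsUltrametricDist K]
  {x : K} {κ : AddChar ℤ_[p] K}

theorem hasSum_powSlope (hx : ‖x‖ < 1) (s : ℤ_[p]) :
    HasSum (fun i => Ring.choose s i • (x ^ (i + 1) / (i + 1 : ℕ))) (powSlope p x s) := by
  have hcoeff := (tendsto_pow_div_natCast_zero p hx).comp (tendsto_add_atTop_nat 1)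
  exact ContinuousMap.hasSum_apply (PadicInt.hasSum_mahlerSeries hcoeff) s

theorem hasSum_powSlope_neg_one (hx : ‖x‖ < 1) :
    HasSum (fun i => (-1) ^ i * (x ^ (i + 1) / (i + 1 : ℕ))) (powSlope p x (-1)) := by
  simpa [ringChoose_neg_one, Algebra.smul_def] using hasSum_powSlope hx (-1)

theorem tendsto_sum_Icc_powSlope_neg_one (hx : ‖x‖ < 1) :
    Tendsto (fun N : ℕ => ∑ j ∈ Finset.Icc 1 N, (-1) ^ (j + 1) * x ^ j / j) atTop
      (𝓝 (powSlope p x (-1))) := by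
  refine (hasSum_powSlope_neg_one hx).tendsto_sum_nat.congr fun N => ?_
  rw [Finset.range_eq_Ico]
  refine .trans ?_ (Finset.sum_Ico_add' (fun j : ℕ => (-1 : K) ^ (j + 1) * x ^ j / j) 0 N 1)
  simp [pow_succ, mul_div_assoc]

theorem addChar_sub_one_eq_smul_powSlope (hκ : Continuous κ) (s : ℤ_[p]) :
    κ s - 1 = s • powSlope p (κ 1 - 1) (s - 1) := by
  have : CharZero K := charZero_of_injective_algebraMap (algebraMap ℚ_[p] K).injective
  have hterm (i : ℕ) (y : K) :
      s • Ring.choose (s - 1) i • (y / (i + 1 : ℕ)) = Ring.choose s (i + 1) • y := by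
    rw [smul_smul, ← succ_mul_ringChoose_succ, mul_comm, mul_smul,
      Nat.cast_smul_eq_nsmul, nsmul_eq_mul, mul_div_cancel₀ _ (Nat.cast_ne_zero.2 i.succ_ne_zero)]
  have htail := (hasSum_nat_add_iff' 1).2 (hasSum_addChar hκ s)
  have hnorm : ‖κ 1 - 1‖ < 1 := (PadicInt.continuousAddCharEquiv_of_norm_mul p K ⟨κ, hκ⟩).2
  have hslope := (hasSum_powSlope hnorm (s - 1)).const_smul s
  simp only [hterm] at hslope
  simpa using htail.unique hslope

theorem tendsto_addChar_sub_one_div [FaithfulSMul ℤ_[p] K] (hκ : Continuous κ) :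
    Tendsto (fun s => (κ s - 1) / algebraMap ℤ_[p] K s) (𝓝[≠] 0)
      (𝓝 (powSlope p (κ 1 - 1) (-1))) := by
  have hcont : Tendsto (fun s => powSlope p (κ 1 - 1) (s - 1)) (𝓝[≠] 0)
      (𝓝 (powSlope p (κ 1 - 1) (-1))) := by
    refine Tendsto.mono_left ?_ nhdsWithin_le_nhds
    exact Continuous.tendsto' (by fun_prop) _ _ (by simp)
  refine hcont.congr' ?_
  filter_upwards [self_mem_nhdsWithin] with s hs
  have hs' : algebraMap ℤ_[p] K s ≠ 0 := by simpa using hs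
  rw [addChar_sub_one_eq_smul_powSlope hκ s, Algebra.smul_def, mul_div_cancel_left₀ _ hs']

theorem tendsto_zpow_sub_one_div [FaithfulSMul ℤ_[p] K] (hx : ‖x‖ < 1) {ι : Type*} {l : Filter ι}
    {m : ι → ℤ} (hm : Tendsto (fun i => padicValInt p (m i)) l atTop) :
    Tendsto (fun i => ((1 + x) ^ m i - 1) / m i) l (𝓝 (powSlope p x (-1))) := by
  obtain ⟨⟨κ, hκ⟩, hκx⟩ :=
    (PadicInt.continuousAddCharEquiv_of_norm_mul p K).surjective ⟨x, hx⟩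
  obtain rfl : κ 1 - 1 = x := congrArg Subtype.val hκx
  have hpow (n : ℤ) : κ n = (κ 1) ^ n := by simpa using κ.map_zsmul_eq_zpow n 1
  simpa [Function.comp_def, hpow] using
    (tendsto_addChar_sub_one_div hκ).comp (tendsto_intCast_nhdsNE_zero hm)

end

theorem zigzag_stmt_8_general (p : ℕ) [Fact p.Prime] {K : Type*} [NormedField K]
    [NormedAlgebra ℚ_[p] K] [CompleteSpace K] {x : K} (hx : ‖x‖ < 1) :
    ∃ L : K,
      Tendsto (fun N : ℕ => ∑ j ∈ Finset.Icc 1 N, (-1) ^ (j + 1) * x ^ j / j) atTop (𝓝 L) ∧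
      ∀ {ι : Type*} {l : Filter ι} (k₀ : ℤ) (k : ι → ℤ),
        Tendsto (fun i => padicValInt p (k i - k₀)) l atTop →
        Tendsto (fun i => ((1 + x) ^ k i - (1 + x) ^ k₀) / (k i - k₀ : ℤ)) l
          (𝓝 ((1 + x) ^ k₀ * L)) := by
  have : IsUltrametricDist K := IsUltrametricDist.of_normedAlgebra ℚ_[p]
  let _ : Algebra ℤ_[p] K := Algebra.compHom K (algebraMap ℤ_[p] ℚ_[p])
  have : IsScalarTower ℤ_[p] ℚ_[p] K := .of_algebraMap_eq fun _ => rfl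
  have : IsBoundedSMul ℤ_[p] K := .of_norm_smul_le fun s y => by
    rw [← algebraMap_smul ℚ_[p] s y]
    exact norm_smul_le _ _
  have : FaithfulSMul ℤ_[p] K := .trans ℤ_[p] ℚ_[p] K
  have hx1 : 1 + x ≠ 0 := by
    intro h
    simp [← neg_eq_of_add_eq_zero_right h] at hx
  refine ⟨powSlope p x (-1), tendsto_sum_Icc_powSlope_neg_one hx, fun k₀ k hk => ?_⟩
  refine ((tendsto_zpow_sub_one_div hx hk).const_mul ((1 + x) ^ k₀)).congr fun i => ?_
  rw [mul_div_assoc', mul_sub, mul_one, ← zpow_add₀ hx1, add_sub_cancel]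

/-- Let `p` be an odd prime. The series `∑_{j≥1} (−1)^{j+1} p^j / j` converges in `ℚ_p`,
with sum `ℒ = log(1+p)`, and for every integer `k₀ ≥ 1` and every sequence of integers
`kₙ > k₀` with `v_p(kₙ − k₀) → ∞`, one has
`((1+p)^{kₙ−1} − (1+p)^{k₀−1})/(kₙ − k₀) → (1+p)^{k₀−1}·ℒ` in `ℚ_p`. -/
theorem zigzag_stmt_8 (p : ℕ) [Fact p.Prime] (hodd : Odd p) :
    ∃ L : ℚ_[p],
      Filter.Tendsto
        (fun N : ℕ => ∑ j ∈ Finset.Icc 1 N, ((-1 : ℚ_[p]) ^ (j + 1) * (p : ℚ_[p]) ^ j / (j : ℚ_[p])))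
        Filter.atTop (nhds L) ∧
      ∀ k₀ : ℤ, 1 ≤ k₀ → ∀ k : ℕ → ℤ, (∀ n, k₀ < k n) →
        Filter.Tendsto (fun n => padicValInt p (k n - k₀)) Filter.atTop Filter.atTop →
        Filter.Tendsto
          (fun n => ((1 + p : ℚ_[p]) ^ (k n - 1) - (1 + p : ℚ_[p]) ^ (k₀ - 1)) /
            ((k n - k₀ : ℤ) : ℚ_[p]))
          Filter.atTop (nhds ((1 + p : ℚ_[p]) ^ (k₀ - 1) * L)) := by
  obtain ⟨L, hL, hlim⟩ := zigzag_stmt_8_general p (Padic.norm_p_lt_one (p := p))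
  exact ⟨L, hL, fun k₀ _ k _ hv => by
    simpa using hlim (k₀ - 1) (fun n => k n - 1) (by simpa using hv)⟩
end

section
/- Let p be an odd prime and let K be a characteristic-zero field with a multiplicative nonarchimedean norm ‖·‖ such that ‖q‖ equals the p-adic absolute value of q for every rational number q (viewed in K). Let r₀ ≥ 1 be an integer and let s ∈ K satisfy s² = p^{r₀}. Let L, H, h, e₁, e₂ ∈ K with h ≠ 0, L ≠ H, ‖H‖ ≤ 1, ‖e₁‖ ≤ ‖h‖², ‖e₂‖ ≤ ‖h‖², and max(1, ‖L‖)²·‖h‖ < ‖L − H‖. Set a = s·(1 + (L/2)·h + e₁) and B = 1 + H·h + e₂. Then ‖(a² − B·p^{r₀})/(p·a)‖ = p^{1 − r₀/2}·‖L − H‖·‖h‖. -/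
/-!
Put `x = L h`, `y = H h` and `u = 1 + x / 2 + e₁`, so that `a = s u` and the quotient is
`(s / p) * ((u ^ 2 - B) / u)`. Expanding the square gives
`u ^ 2 - B = (x - y) + (2 e₁ - e₂ + (x / 2 + e₁) ^ 2)`. With `δ = max 1 ‖L‖ * ‖h‖` bounding `x`
and `y`, everything but `x - y` has norm at most `δ ^ 2`, and `δ ^ 2 < ‖x - y‖ ≤ δ`. Hence `x - y`
dominates and, since `δ < 1`, `u` has norm one.
-/

section Ultrametric

variable {E : Type*} [SeminormedAddGroup E] [IsUltrametricDist E] {x y : E} {C : ℝ}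

theorem norm_add_le_of_norm_le_of_norm_le (hx : ‖x‖ ≤ C) (hy : ‖y‖ ≤ C) : ‖x + y‖ ≤ C :=
  (IsUltrametricDist.norm_add_le_max x y).trans (max_le hx hy)

theorem norm_sub_le_of_norm_le_of_norm_le (hx : ‖x‖ ≤ C) (hy : ‖y‖ ≤ C) : ‖x - y‖ ≤ C := by
  rw [sub_eq_add_neg]
  exact norm_add_le_of_norm_le_of_norm_le hx (by rwa [norm_neg])

theorem norm_add_eq_left_of_norm_lt (hxy : ‖y‖ < ‖x‖) : ‖x + y‖ = ‖x‖ := by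
  rw [IsUltrametricDist.norm_add_eq_max_of_norm_ne_norm hxy.ne', max_eq_left hxy.le]

end Ultrametric

theorem norm_eq_rpow_div_of_pow_eq_pow {K : Type*} [NormedDivisionRing K] {s c : K} {m n : ℕ}
    (hm : m ≠ 0) (hs : s ^ m = c ^ n) : ‖s‖ = ‖c‖ ^ ((n : ℝ) / m) := by
  have hnorm : ‖s‖ ^ m = ‖c‖ ^ n := by rw [← norm_pow, hs, norm_pow]
  rw [← Real.pow_rpow_inv_natCast (norm_nonneg s) hm, hnorm, ← Real.rpow_natCast,
    ← Real.rpow_mul (norm_nonneg c), div_eq_mul_inv]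

section PadicNorm

variable {K : Type*} [NormedDivisionRing K] {p : ℕ}

theorem norm_natCast_self_of_norm_ratCast_eq_padicNorm (hp : 1 < p)
    (hcompat : ∀ q : ℚ, ‖(q : K)‖ = ((padicNorm p q : ℚ) : ℝ)) : ‖(p : K)‖ = (p : ℝ)⁻¹ := by
  simpa [padicNorm.padicNorm_p hp] using hcompat p

theorem norm_natCast_of_coprime_of_norm_ratCast_eq_padicNorm (hp : p.Prime) {n : ℕ}
    (hn : p.Coprime n) (hcompat : ∀ q : ℚ, ‖(q : K)‖ = ((padicNorm p q : ℚ) : ℝ)) :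
    ‖(n : K)‖ = 1 := by
  have : Fact p.Prime := ⟨hp⟩
  have hpadic : padicNorm p n = 1 :=
    (padicNorm.nat_eq_one_iff n).mpr (hp.coprime_iff_not_dvd.mp hn)
  rw [← Rat.cast_natCast, hcompat, hpadic, Rat.cast_one]

end PadicNorm

section Perturbation

variable {K : Type*} [NormedField K] [IsUltrametricDist K] {x y e₁ e₂ : K} {δ : ℝ}

theorem norm_half_add_le (h2 : ‖(2 : K)‖ = 1) (hδ : δ ≤ 1) (hx : ‖x‖ ≤ δ) (he₁ : ‖e₁‖ ≤ δ ^ 2) :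
    ‖x / 2 + e₁‖ ≤ δ := by
  have hδ₀ : 0 ≤ δ := (norm_nonneg x).trans hx
  refine norm_add_le_of_norm_le_of_norm_le ?_ (he₁.trans (pow_le_of_le_one hδ₀ hδ two_ne_zero))
  rwa [norm_div, h2, div_one]

theorem norm_one_add_half_add (h2 : ‖(2 : K)‖ = 1) (hδ : δ < 1) (hx : ‖x‖ ≤ δ)
    (he₁ : ‖e₁‖ ≤ δ ^ 2) : ‖1 + x / 2 + e₁‖ = 1 := by
  have hlt : ‖x / 2 + e₁‖ < ‖(1 : K)‖ := by
    rw [norm_one]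
    exact (norm_half_add_le h2 hδ.le hx he₁).trans_lt hδ
  rw [add_assoc, norm_add_eq_left_of_norm_lt hlt, norm_one]

theorem norm_one_add_half_add_sq_sub (h2 : ‖(2 : K)‖ = 1) (hδ : δ ≤ 1) (hx : ‖x‖ ≤ δ)
    (he₁ : ‖e₁‖ ≤ δ ^ 2) (he₂ : ‖e₂‖ ≤ δ ^ 2) (hxy : δ ^ 2 < ‖x - y‖) :
    ‖(1 + x / 2 + e₁) ^ 2 - (1 + y + e₂)‖ = ‖x - y‖ := by
  have h20 : (2 : K) ≠ 0 := norm_ne_zero_iff.mp (h2 ▸ one_ne_zero)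
  have hlinear : ‖2 * e₁ - e₂‖ ≤ δ ^ 2 :=
    norm_sub_le_of_norm_le_of_norm_le (by rwa [norm_mul, h2, one_mul]) he₂
  have hsquare : ‖(x / 2 + e₁) ^ 2‖ ≤ δ ^ 2 := by
    rw [norm_pow]
    gcongr
    exact norm_half_add_le h2 hδ hx he₁
  have hexpand : (1 + x / 2 + e₁) ^ 2 - (1 + y + e₂) =
      (x - y) + (2 * e₁ - e₂ + (x / 2 + e₁) ^ 2) := by
    field_simp
    ring
  rw [hexpand]
  exact norm_add_eq_left_of_norm_lt
    ((norm_add_le_of_norm_le_of_norm_le hlinear hsquare).trans_lt hxy)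

theorem norm_one_add_half_add_sq_sub_div (h2 : ‖(2 : K)‖ = 1) (hx : ‖x‖ ≤ δ) (hy : ‖y‖ ≤ δ)
    (he₁ : ‖e₁‖ ≤ δ ^ 2) (he₂ : ‖e₂‖ ≤ δ ^ 2) (hxy : δ ^ 2 < ‖x - y‖) :
    ‖((1 + x / 2 + e₁) ^ 2 - (1 + y + e₂)) / (1 + x / 2 + e₁)‖ = ‖x - y‖ := by
  have hsq : δ ^ 2 < δ := hxy.trans_le (norm_sub_le_of_norm_le_of_norm_le hx hy)
  have hδ : δ < 1 := by nlinarith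
  rw [norm_div, norm_one_add_half_add h2 hδ hx he₁, div_one,
    norm_one_add_half_add_sq_sub h2 hδ.le hx he₁ he₂ hxy]

end Perturbation

theorem zigzag_stmt_9_general {K : Type*} [NormedField K] [IsUltrametricDist K]
    (h2 : ‖(2 : K)‖ = 1) {c s : K} (hc : c ≠ 0) {n : ℕ} (hs : s ^ 2 = c ^ n)
    {L H h e₁ e₂ : K} (hh : h ≠ 0) (hH : ‖H‖ ≤ max 1 ‖L‖)
    (he₁ : ‖e₁‖ ≤ ‖h‖ ^ 2) (he₂ : ‖e₂‖ ≤ ‖h‖ ^ 2)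
    (hsmall : (max 1 ‖L‖) ^ 2 * ‖h‖ < ‖L - H‖)
    {a B : K} (ha : a = s * (1 + (L / 2) * h + e₁)) (hB : B = 1 + H * h + e₂) :
    ‖(a ^ 2 - B * c ^ n) / (c * a)‖ = ‖c‖ ^ ((n : ℝ) / 2 - 1) * ‖L - H‖ * ‖h‖ := by
  have hscale : ‖s / c‖ = ‖c‖ ^ ((n : ℝ) / 2 - 1) := by
    rw [norm_div, norm_eq_rpow_div_of_pow_eq_pow two_ne_zero hs, Nat.cast_ofNat,
      Real.rpow_sub_one (norm_ne_zero_iff.mpr hc)]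
  have hbound {z : K} (hz : ‖z‖ ≤ max 1 ‖L‖) : ‖z * h‖ ≤ max 1 ‖L‖ * ‖h‖ := by
    rw [norm_mul]
    gcongr
  have herror : ‖h‖ ^ 2 ≤ (max 1 ‖L‖ * ‖h‖) ^ 2 := by
    gcongr
    exact le_mul_of_one_le_left (norm_nonneg h) (le_max_left _ _)
  have hgap : (max 1 ‖L‖ * ‖h‖) ^ 2 < ‖L * h - H * h‖ := by
    rw [← sub_mul, norm_mul, mul_pow, sq ‖h‖, ← mul_assoc]
    exact mul_lt_mul_of_pos_right hsmall (norm_pos_iff.mpr hh)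
  have hfactor : (a ^ 2 - B * c ^ n) / (c * a) = s / c *
      (((1 + L * h / 2 + e₁) ^ 2 - (1 + H * h + e₂)) / (1 + L * h / 2 + e₁)) := by
    rw [ha, hB, ← hs, div_mul_eq_mul_div]
    field_simp
  rw [hfactor, norm_mul, hscale, norm_one_add_half_add_sq_sub_div h2 (hbound (le_max_right _ _))
    (hbound hH) (he₁.trans herror) (he₂.trans herror) hgap, ← sub_mul, norm_mul, mul_assoc]

/-- The key valuation computation (generic case): let `p` be an odd prime and `K` a
characteristic-zero field with a multiplicative nonarchimedean norm restricting to the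
`p`-adic absolute value on `ℚ`. Let `r₀ ≥ 1`, `s² = p^{r₀}`, and let `L, H, h, e₁, e₂ ∈ K`
with `h ≠ 0`, `L ≠ H`, `‖H‖ ≤ 1`, `‖e₁‖ ≤ ‖h‖²`, `‖e₂‖ ≤ ‖h‖²` and
`max(1,‖L‖)²·‖h‖ < ‖L − H‖`. For `a = s(1 + (L/2)h + e₁)` and `B = 1 + Hh + e₂`, one has
`‖(a² − B·p^{r₀})/(p·a)‖ = p^{1 − r₀/2}·‖L − H‖·‖h‖`. -/
theorem zigzag_stmt_9 (p : ℕ) (hp : p.Prime) (hodd : Odd p)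
    {K : Type*} [NormedField K] [CharZero K] [IsUltrametricDist K]
    (hcompat : ∀ q : ℚ, ‖(q : K)‖ = ((padicNorm p q : ℚ) : ℝ))
    (r₀ : ℕ) (hr₀ : 1 ≤ r₀) (s : K) (hs : s ^ 2 = (p : K) ^ r₀)
    (L H h e₁ e₂ : K) (hh : h ≠ 0) (hLH : L ≠ H) (hH : ‖H‖ ≤ 1)
    (he₁ : ‖e₁‖ ≤ ‖h‖ ^ 2) (he₂ : ‖e₂‖ ≤ ‖h‖ ^ 2)
    (hsmall : (max 1 ‖L‖) ^ 2 * ‖h‖ < ‖L - H‖)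
    (a B : K) (ha : a = s * (1 + (L / 2) * h + e₁)) (hB : B = 1 + H * h + e₂) :
    ‖(a ^ 2 - B * (p : K) ^ r₀) / ((p : K) * a)‖ =
      (p : ℝ) ^ ((1 : ℝ) - (r₀ : ℝ) / 2) * ‖L - H‖ * ‖h‖ := by
  have h2 : ‖(2 : K)‖ = 1 := mod_cast
    norm_natCast_of_coprime_of_norm_ratCast_eq_padicNorm hp hodd.coprime_two_right hcompat
  rw [zigzag_stmt_9_general h2 (Nat.cast_ne_zero.mpr hp.ne_zero) hs hh
      (hH.trans (le_max_left _ _)) he₁ he₂ hsmall ha hB,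
    norm_natCast_self_of_norm_ratCast_eq_padicNorm hp.one_lt hcompat,
    ← Real.rpow_neg_eq_inv_rpow, neg_sub]
end

section
/- Let p ≥ 5 be a prime and let k₀ be an integer with 3 ≤ k₀ ≤ p+1; set r₀ = k₀ − 2, let v₋ be the largest integer with v₋ < r₀/2 and v₊ the smallest integer with v₊ > r₀/2, and write H₋ = H_{v₋}, H₊ = H_{v₊}. Let K be a characteristic-zero field with a multiplicative nonarchimedean norm ‖·‖ such that ‖q‖ equals the p-adic absolute value of q for every rational number q (viewed in K), and let s ∈ K satisfy s² = p^{r₀}. Let k be an integer with k > k₀ and k ≡ k₀ mod (p−1), set r = k − 2 and t = v_p(k − k₀). Let L, e ∈ K satisfy ‖e‖ ≤ p^{−2t}, L ≠ H₋ + H₊ (as elements of K) and max(1, ‖L‖)²·p^{−t} < ‖L − H₋ − H₊‖, and set a = s·(1 + (L/2)·(k − k₀) + e). Then, for c = (a² − C(r−v₋, v₊)·C(r−v₊, v₋)·p^{r₀})/(p·a) with C(·,·) the usual binomial coefficients, one has ‖c‖ = p^{1 − r₀/2}·‖L − H₋ − H₊‖·p^{−t}; equivalently, the valuation τ of c equals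 r₀/2 − 1 + ν + t, where ν is the valuation of L − H₋ − H₊. -/
/-!
Write `n = k - k₀`, so that `r - v₋ = n + v₊` and `r - v₊ = n + v₋`. Both `(a / s)²` and the product
`C(n + v₊, v₊) C(n + v₋, v₋) = ∏_{i ≤ v₊} (1 + n / i) ∏_{i ≤ v₋} (1 + n / i)` are products of
factors close to `1`. They therefore equal `1 + L n` and `1 + (H₋ + H₊) n` up to an error of norm at
most `(max(1, ‖L‖) ‖n‖)²`. The smallness hypothesis says exactly that `(L - H₋ - H₊) n` dominates
this error, so it determines the norm of the numerator of `c`.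
-/

lemma norm_sub_le_max {S : Type*} [SeminormedAddGroup S] [IsUltrametricDist S] (x y : S) :
    ‖x - y‖ ≤ max ‖x‖ ‖y‖ := by
  simpa only [sub_eq_add_neg, norm_neg] using IsUltrametricDist.norm_add_le_max x (-y)

lemma max_one_norm_mul_lt_one {S : Type*} [SeminormedAddGroup S] [IsUltrametricDist S]
    {L H : S} {δ : ℝ} (hH : ‖H‖ ≤ 1) (hδ : max 1 ‖L‖ ^ 2 * δ < ‖L - H‖) :
    max 1 ‖L‖ * δ < 1 := by
  have hpos : 0 < max 1 ‖L‖ := zero_lt_one.trans_le (le_max_left _ _)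
  have hLH : ‖L - H‖ ≤ max 1 ‖L‖ :=
    (norm_sub_le_max L H).trans (max_le (le_max_right _ _) (hH.trans (le_max_left _ _)))
  refine lt_of_mul_lt_mul_left ?_ hpos.le
  calc max 1 ‖L‖ * (max 1 ‖L‖ * δ) = max 1 ‖L‖ ^ 2 * δ := by ring
    _ < max 1 ‖L‖ * 1 := by linarith

/-- `A = 1 + α + O(q²)` with `α = O(q)`, where the implied constants are `1`. In an ultrametric ring
such expansions multiply by adding the first-order terms `α`, with the same scale `q ≤ 1`. -/
structure HasFirstOrderExpansion {R : Type*} [SeminormedRing R] (A α : R) (q : ℝ) : Prop where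
  norm_le : ‖α‖ ≤ q
  norm_sub_le : ‖A - (1 + α)‖ ≤ q ^ 2

namespace HasFirstOrderExpansion

section Ring

variable {R : Type*} [SeminormedRing R] {A B α β : R} {q q' : ℝ}

lemma one_add (hα : ‖α‖ ≤ q) : HasFirstOrderExpansion (1 + α) α q :=
  ⟨hα, by simpa using sq_nonneg q⟩

lemma mono (hA : HasFirstOrderExpansion A α q) (hq : q ≤ q') : HasFirstOrderExpansion A α q' where
  norm_le := hA.norm_le.trans hq
  norm_sub_le := by
    have hq₀ : 0 ≤ q := (norm_nonneg α).trans hA.norm_le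
    exact hA.norm_sub_le.trans (by gcongr)

variable [IsUltrametricDist R]

lemma norm_sub_eq (hA : HasFirstOrderExpansion A α q) (hB : HasFirstOrderExpansion B β q)
    (hq : q ^ 2 < ‖α - β‖) : ‖A - B‖ = ‖α - β‖ := by
  have herr : ‖(A - B) + -(α - β)‖ ≤ q ^ 2 := by
    rw [show (A - B) + -(α - β) = (A - (1 + α)) - (B - (1 + β)) by abel]
    exact (norm_sub_le_max _ _).trans (max_le hA.norm_sub_le hB.norm_sub_le)
  rw [← norm_neg (α - β)]
  refine IsUltrametricDist.norm_eq_of_add_norm_lt_max (herr.trans_lt (hq.trans_le ?_))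
  exact (norm_neg (α - β)).ge.trans (le_max_right _ _)

lemma norm_sub_one_le (hA : HasFirstOrderExpansion A α q) (hq : q ≤ 1) : ‖A - 1‖ ≤ q := by
  have hq₀ : 0 ≤ q := (norm_nonneg α).trans hA.norm_le
  rw [show A - 1 = (A - (1 + α)) + α by abel]
  exact (IsUltrametricDist.norm_add_le_max _ _).trans
    (max_le (hA.norm_sub_le.trans (by nlinarith)) hA.norm_le)

lemma norm_eq_one [NormOneClass R] (hA : HasFirstOrderExpansion A α q) (hq : q < 1) : ‖A‖ = 1 := by
  have hlt : ‖A + -1‖ < max ‖A‖ ‖(-1 : R)‖ := by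
    rw [← sub_eq_add_neg, norm_neg, norm_one]
    exact ((hA.norm_sub_one_le hq.le).trans_lt hq).trans_le (le_max_right _ _)
  simpa using IsUltrametricDist.norm_eq_of_add_norm_lt_max hlt

lemma mul (hA : HasFirstOrderExpansion A α q) (hB : HasFirstOrderExpansion B β q) (hq : q ≤ 1) :
    HasFirstOrderExpansion (A * B) (α + β) q where
  norm_le := (IsUltrametricDist.norm_add_le_max _ _).trans (max_le hA.norm_le hB.norm_le)
  norm_sub_le := by
    have hq₀ : 0 ≤ q := (norm_nonneg α).trans hA.norm_le
    have hA₁ := hA.norm_sub_one_le hq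
    have hB₁ := hB.norm_sub_one_le hq
    rw [show A * B - (1 + (α + β)) = (A - (1 + α)) + (B - (1 + β)) + (A - 1) * (B - 1) by
      noncomm_ring]
    refine (IsUltrametricDist.norm_add_le_max _ _).trans (max_le ?_ ?_)
    · exact (IsUltrametricDist.norm_add_le_max _ _).trans (max_le hA.norm_sub_le hB.norm_sub_le)
    · calc ‖(A - 1) * (B - 1)‖ ≤ ‖A - 1‖ * ‖B - 1‖ := norm_mul_le _ _
        _ ≤ q ^ 2 := by rw [sq]; gcongr

end Ring

lemma prod {R ι : Type*} [SeminormedCommRing R] [IsUltrametricDist R]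
    {s : Finset ι} {A α : ι → R} {q : ℝ} (hA : ∀ i ∈ s, HasFirstOrderExpansion (A i) (α i) q)
    (hq₀ : 0 ≤ q) (hq : q ≤ 1) :
    HasFirstOrderExpansion (∏ i ∈ s, A i) (∑ i ∈ s, α i) q := by
  classical
  induction s using Finset.induction_on with
  | empty => simpa using one_add (α := (0 : R)) (by simpa using hq₀)
  | insert i s hi ih =>
    rw [Finset.prod_insert hi, Finset.sum_insert hi]
    exact (hA i (Finset.mem_insert_self i s)).mul
      (ih fun j hj ↦ hA j (Finset.mem_insert_of_mem hj)) hq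

end HasFirstOrderExpansion

lemma cast_add_choose_eq_prod {K : Type*} [Field K] [CharZero K] (n v : ℕ) :
    ((n + v).choose v : K) = ∏ i ∈ Finset.range v, (1 + n * ((i + 1 : ℕ) : K)⁻¹) := by
  induction v with
  | zero => simp
  | succ v ih =>
    have hv : ((v + 1 : ℕ) : K) ≠ 0 := Nat.cast_ne_zero.mpr v.succ_ne_zero
    have hrec : ((n + v + 1 : ℕ) : K) * ((n + v).choose v : K) =
        ((n + (v + 1)).choose (v + 1) : K) * ((v + 1 : ℕ) : K) := by
      exact_mod_cast Nat.add_one_mul_choose_eq (n + v) v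
    rw [Finset.prod_range_succ, ← ih, eq_div_of_mul_eq hv hrec.symm]
    field_simp
    push_cast
    ring

section NormedField

variable {K : Type*} [NormedField K]

lemma norm_eq_rpow_of_sq_eq_zpow {s x : K} {m : ℤ} (hs : s ^ 2 = x ^ m) :
    ‖s‖ = ‖x‖ ^ ((m : ℝ) / 2) := by
  rw [← Real.sqrt_sq (norm_nonneg s), ← norm_pow, hs, norm_zpow, Real.sqrt_eq_rpow,
    ← Real.rpow_intCast, ← Real.rpow_mul (norm_nonneg x), mul_one_div]

lemma norm_sq_sub_mul_sq_div {A : K} (hA : ‖A‖ = 1) (s B x : K) :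
    ‖((s * A) ^ 2 - B * s ^ 2) / (x * (s * A))‖ = ‖s‖ / ‖x‖ * ‖A ^ 2 - B‖ := by
  rw [show (s * A) ^ 2 - B * s ^ 2 = s ^ 2 * (A ^ 2 - B) by ring]
  simp only [norm_div, norm_mul, norm_pow, hA]
  field_simp

variable [IsUltrametricDist K] [CharZero K]

lemma norm_harmonic_le_one {v : ℕ} (hv : ∀ i < v, ‖((i + 1 : ℕ) : K)‖ = 1) :
    ‖(harmonic v : K)‖ ≤ 1 := by
  rw [harmonic, Rat.cast_sum]
  refine IsUltrametricDist.norm_sum_le_of_forall_le_of_nonneg zero_le_one fun i hi ↦ ?_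
  rw [Rat.cast_inv, Rat.cast_natCast, norm_inv, hv i (Finset.mem_range.mp hi), inv_one]

lemma hasFirstOrderExpansion_choose (n : ℕ) {v : ℕ} (hv : ∀ i < v, ‖((i + 1 : ℕ) : K)‖ = 1) :
    HasFirstOrderExpansion ((n + v).choose v : K) (n * (harmonic v : K)) ‖(n : K)‖ := by
  rw [cast_add_choose_eq_prod, harmonic, Rat.cast_sum, Finset.mul_sum]
  simp only [Rat.cast_inv, Rat.cast_natCast]
  refine .prod (fun i hi ↦ .one_add ?_) (norm_nonneg _)
    (IsUltrametricDist.norm_natCast_le_one K n)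
  rw [norm_mul, norm_inv, hv i (Finset.mem_range.mp hi), inv_one, mul_one]

theorem norm_sq_sub_choose_mul_choose {n u v : ℕ} {L A : K} (h₂ : ‖(2 : K)‖ = 1) (hn : n ≠ 0)
    (hu : ∀ i < u, ‖((i + 1 : ℕ) : K)‖ = 1) (hv : ∀ i < v, ‖((i + 1 : ℕ) : K)‖ = 1)
    (hA : ‖A - (1 + L / 2 * n)‖ ≤ ‖(n : K)‖ ^ 2)
    (hL : max 1 ‖L‖ ^ 2 * ‖(n : K)‖ < ‖L - ((harmonic u + harmonic v : ℚ) : K)‖) :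
    ‖A‖ = 1 ∧ ‖A ^ 2 - (n + v).choose v * (n + u).choose u‖ =
      ‖L - ((harmonic u + harmonic v : ℚ) : K)‖ * ‖(n : K)‖ := by
  rw [Rat.cast_add] at hL ⊢
  have hn₀ : 0 < ‖(n : K)‖ := norm_pos_iff.mpr (Nat.cast_ne_zero.mpr hn)
  set q : ℝ := max 1 ‖L‖ * ‖(n : K)‖
  have hnq : ‖(n : K)‖ ≤ q := le_mul_of_one_le_left hn₀.le (le_max_left _ _)
  have hq₁ : q < 1 := max_one_norm_mul_lt_one ((IsUltrametricDist.norm_add_le_max _ _).trans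
    (max_le (norm_harmonic_le_one hu) (norm_harmonic_le_one hv))) hL
  have hA' : HasFirstOrderExpansion A (L / 2 * n) q := by
    refine ⟨?_, hA.trans (by gcongr)⟩
    rw [norm_mul, norm_div, h₂, div_one]
    exact mul_le_mul_of_nonneg_right (le_max_right _ _) hn₀.le
  have hchoose := ((hasFirstOrderExpansion_choose n hv).mono hnq).mul
    ((hasFirstOrderExpansion_choose n hu).mono hnq) hq₁.le
  have hdiff : L / 2 * n + L / 2 * n - (n * (harmonic v : K) + n * (harmonic u : K)) =
      (L - (harmonic u + harmonic v)) * n := by ring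
  have hdom : q ^ 2 < ‖(L - (harmonic u + harmonic v)) * n‖ := by
    rw [norm_mul]
    calc q ^ 2 = max 1 ‖L‖ ^ 2 * ‖(n : K)‖ * ‖(n : K)‖ := by ring
      _ < _ := by gcongr
  refine ⟨hA'.norm_eq_one hq₁, ?_⟩
  rw [sq, (hA'.mul hA' hq₁.le).norm_sub_eq hchoose (hdiff ▸ hdom), hdiff, norm_mul]

end NormedField

/-- The norm of `K` restricts to the `p`-adic absolute value on the prime field, stated through the
cast `ℚ → K`. -/
def ExtendsPadicNorm (p : ℕ) (K : Type*) [NormedField K] : Prop :=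
  ∀ q : ℚ, ‖(q : K)‖ = (padicNorm p q : ℝ)

namespace ExtendsPadicNorm

variable {p : ℕ} {K : Type*} [NormedField K]

lemma norm_natCast (hK : ExtendsPadicNorm p K) (m : ℕ) : ‖(m : K)‖ = (padicNorm p m : ℝ) := by
  simpa using hK m

lemma norm_intCast_eq_zpow (hK : ExtendsPadicNorm p K) {m : ℤ} (hm : m ≠ 0) :
    ‖(m : K)‖ = (p : ℝ) ^ (-(padicValInt p m : ℤ)) := by
  rw [← Rat.cast_intCast, hK, padicNorm.eq_zpow_of_nonzero (Int.cast_ne_zero.mpr hm),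
    padicValRat.of_int, Rat.cast_zpow, Rat.cast_natCast]

variable [Fact p.Prime]

lemma charZero (hK : ExtendsPadicNorm p K) : CharZero K :=
  charZero_of_inj_zero fun m hm ↦ by
    have hm' : (padicNorm p m : ℝ) = 0 := by rw [← hK.norm_natCast, hm, norm_zero]
    exact_mod_cast padicNorm.zero_of_padicNorm_eq_zero (Rat.cast_eq_zero.mp hm')

lemma isUltrametricDist (hK : ExtendsPadicNorm p K) : IsUltrametricDist K :=
  IsUltrametricDist.isUltrametricDist_of_forall_norm_natCast_le_one fun m ↦ by
    rw [hK.norm_natCast]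
    exact_mod_cast padicNorm.of_nat m

lemma norm_natCast_eq_one (hK : ExtendsPadicNorm p K) {m : ℕ} (hm : ¬p ∣ m) : ‖(m : K)‖ = 1 := by
  rw [hK.norm_natCast, (padicNorm.nat_eq_one_iff m).mpr hm, Rat.cast_one]

lemma norm_prime (hK : ExtendsPadicNorm p K) : ‖(p : K)‖ = (p : ℝ)⁻¹ := by
  rw [hK.norm_natCast, padicNorm.padicNorm_p_of_prime, Rat.cast_inv, Rat.cast_natCast]

lemma norm_div_norm_prime_of_sq_eq_zpow (hK : ExtendsPadicNorm p K) {s : K} {m : ℤ}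
    (hs : s ^ 2 = (p : K) ^ m) : ‖s‖ / ‖(p : K)‖ = (p : ℝ) ^ (1 - (m : ℝ) / 2) := by
  have hp₀ : (0 : ℝ) < p := by exact_mod_cast (Fact.out : p.Prime).pos
  rw [norm_eq_rpow_of_sq_eq_zpow hs, hK.norm_prime, div_inv_eq_mul, Real.inv_rpow hp₀.le,
    Real.rpow_sub hp₀, Real.rpow_one]
  exact (div_eq_inv_mul _ _).symm

end ExtendsPadicNorm

theorem zigzag_stmt_10_general {p : ℕ} [Fact p.Prime] (hp₂ : 2 < p) {k₀ k : ℤ} (hk : k₀ < k)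
    {vminus vplus : ℕ} (hsum : (vminus : ℤ) + vplus = k₀ - 2) (hvminus : vminus < p)
    (hvplus : vplus < p) {K : Type*} [NormedField K] (hK : ExtendsPadicNorm p K) {s L e a : K}
    (hs : s ^ 2 = (p : K) ^ (k₀ - 2))
    (he : ‖e‖ ≤ (p : ℝ) ^ (-(2 * padicValInt p (k - k₀) : ℤ)))
    (hL : max 1 ‖L‖ ^ 2 * (p : ℝ) ^ (-(padicValInt p (k - k₀) : ℤ)) <
      ‖L - ((harmonic vminus + harmonic vplus : ℚ) : K)‖)
    (ha : a = s * (1 + L / 2 * ((k - k₀ : ℤ) : K) + e)) :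
    ‖(a ^ 2 - (((k - 2 - vminus).toNat.choose vplus : K) *
        ((k - 2 - vplus).toNat.choose vminus : K)) * (p : K) ^ (k₀ - 2)) / ((p : K) * a)‖ =
      (p : ℝ) ^ ((1 : ℝ) - ((k₀ - 2 : ℤ) : ℝ) / 2) *
        ‖L - ((harmonic vminus + harmonic vplus : ℚ) : K)‖ *
        (p : ℝ) ^ (-(padicValInt p (k - k₀) : ℤ)) := by
  have := hK.charZero
  have := hK.isUltrametricDist
  have hunit {w : ℕ} (hw : w < p) : ∀ i < w, ‖((i + 1 : ℕ) : K)‖ = 1 := fun i hi ↦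
    hK.norm_natCast_eq_one (Nat.not_dvd_of_pos_of_lt i.succ_pos (by omega))
  have h₂ : ‖(2 : K)‖ = 1 := by simpa using hunit hp₂ 1 one_lt_two
  obtain ⟨n, hn⟩ := Int.eq_ofNat_of_zero_le (sub_nonneg.mpr hk.le)
  have hplus : (k - 2 - vminus).toNat = n + vplus := by omega
  have hminus : (k - 2 - vplus).toNat = n + vminus := by omega
  have hnorm : ‖(n : K)‖ = (p : ℝ) ^ (-(padicValInt p (k - k₀) : ℤ)) := by
    rw [← hK.norm_intCast_eq_zpow (sub_ne_zero.mpr hk.ne'), hn, Int.cast_natCast]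
  have hA : ‖1 + L / 2 * n + e - (1 + L / 2 * n)‖ ≤ ‖(n : K)‖ ^ 2 := by
    rw [add_sub_cancel_left, hnorm, ← zpow_natCast, ← zpow_mul]
    convert he using 2
    push_cast
    ring
  rw [← hnorm] at hL
  obtain ⟨hA₁, hAC⟩ := norm_sq_sub_choose_mul_choose h₂ (by omega) (hunit hvminus) (hunit hvplus)
    hA hL
  rw [ha, ← hs, hplus, hminus, ← hnorm, hn, Int.cast_natCast, norm_sq_sub_mul_sq_div hA₁, hAC,
    hK.norm_div_norm_prime_of_sq_eq_zpow hs, mul_assoc]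

/-- The paper's key computation of the zig-zag parameter `τ = v(c)`: let `p ≥ 5` be prime,
`3 ≤ k₀ ≤ p+1`, `r₀ = k₀ − 2`, let `v₋` (`vminus`) be the largest integer `< r₀/2` and
`v₊` (`vplus`) the smallest integer `> r₀/2`, with partial harmonic sums `H₋, H₊`. Let `K`
be a characteristic-zero field with a multiplicative nonarchimedean norm restricting to
the `p`-adic absolute value on `ℚ`, and `s ∈ K` with `s² = p^{r₀}`. Let `k > k₀` with
`k ≡ k₀ mod (p−1)`, `r = k − 2`, `t = v_p(k − k₀)`. Let `L, e ∈ K` with `‖e‖ ≤ p^{−2t}`,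
`L ≠ H₋ + H₊` and `max(1,‖L‖)²·p^{−t} < ‖L − H₋ − H₊‖`, and set
`a = s(1 + (L/2)(k − k₀) + e)`. Then for
`c = (a² − C(r−v₋,v₊)·C(r−v₊,v₋)·p^{r₀})/(p·a)` one has
`‖c‖ = p^{1 − r₀/2}·‖L − H₋ − H₊‖·p^{−t}`, i.e. `τ = r₀/2 − 1 + ν + t`. -/
theorem zigzag_stmt_10 (p : ℕ) (hp : p.Prime) (hp5 : 5 ≤ p)
    (k₀ : ℤ) (hk₀ : 3 ≤ k₀) (hk₀' : k₀ ≤ (p : ℤ) + 1)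
    (r₀ : ℤ) (hr₀ : r₀ = k₀ - 2)
    (vminus vplus : ℕ)
    (hvminus : 2 * (vminus : ℤ) < r₀ ∧ r₀ ≤ 2 * (vminus : ℤ) + 2)
    (hvplus : r₀ < 2 * (vplus : ℤ) ∧ 2 * (vplus : ℤ) ≤ r₀ + 2)
    (Hminus Hplus : ℚ)
    (hHminus : Hminus = ∑ i ∈ Finset.Icc 1 vminus, (1 / (i : ℚ)))
    (hHplus : Hplus = ∑ i ∈ Finset.Icc 1 vplus, (1 / (i : ℚ)))
    {K : Type*} [NormedField K] [CharZero K] [IsUltrametricDist K]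
    (hcompat : ∀ q : ℚ, ‖(q : K)‖ = ((padicNorm p q : ℚ) : ℝ))
    (s : K) (hs : s ^ 2 = (p : K) ^ r₀)
    (k : ℤ) (hk : k₀ < k) (hcong : k ≡ k₀ [ZMOD ((p : ℤ) - 1)])
    (r : ℤ) (hr : r = k - 2)
    (t : ℕ) (ht : t = padicValInt p (k - k₀))
    (L e : K)
    (he : ‖e‖ ≤ (p : ℝ) ^ (-(2 * t : ℤ)))
    (hLH : L ≠ ((Hminus + Hplus : ℚ) : K))
    (hsmall : (max 1 ‖L‖) ^ 2 * (p : ℝ) ^ (-(t : ℤ)) < ‖L - ((Hminus + Hplus : ℚ) : K)‖)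
    (a c : K)
    (ha : a = s * (1 + (L / 2) * ((k - k₀ : ℤ) : K) + e))
    (hc : c = (a ^ 2 -
        (((r - (vminus : ℤ)).toNat.choose vplus : K) *
          ((r - (vplus : ℤ)).toNat.choose vminus : K)) * (p : K) ^ r₀) / ((p : K) * a)) :
    ‖c‖ = (p : ℝ) ^ ((1 : ℝ) - (r₀ : ℝ) / 2) * ‖L - ((Hminus + Hplus : ℚ) : K)‖ *
      (p : ℝ) ^ (-(t : ℤ)) := by
  have : Fact p.Prime := ⟨hp⟩
  obtain rfl : Hminus = harmonic vminus := by simp [hHminus, harmonic_eq_sum_Icc]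
  obtain rfl : Hplus = harmonic vplus := by simp [hHplus, harmonic_eq_sum_Icc]
  subst hr₀ hr ht hc
  exact zigzag_stmt_10_general (by omega) hk (by omega) (by omega) (by omega) hcompat hs he
    hsmall ha
end

section
/- Let p be an odd prime and let K be a characteristic-zero field with a multiplicative nonarchimedean norm ‖·‖ such that ‖q‖ equals the p-adic absolute value of q for every rational number q (viewed in K). Let r₀ ≥ 1 be an integer and let s ∈ K satisfy s² = p^{r₀}. Let L, h, e₁, e₂ ∈ K with ‖e₁‖ ≤ ‖h‖², ‖e₂‖ ≤ ‖h‖², and max(1, ‖L‖)·‖h‖ < 1. Set a = s·(1 + (L/2)·h + e₁) and B = 1 + L·h + e₂. Then ‖(a² − B·p^{r₀})/(p·a)‖ ≤ p^{1 − r₀/2}·max(1, ‖L‖)²·‖h‖². -/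
/-!
Write `x = (L / 2) * h` and `u = 1 + x + e₁`, so that `a = s * u` and `B = 1 + 2 * x + e₂`. The
terms of order at most one in `x` cancel in `u ^ 2 - B = (x + e₁) ^ 2 + 2 * e₁ - e₂`, which leaves
an error of order two, while `u` has norm one. Hence
`(a ^ 2 - B * s ^ 2) / (p * a) = s / p * ((u ^ 2 - B) / u)` has norm at most
`‖s / p‖ * (max 1 ‖L / 2‖ * ‖h‖) ^ 2`, and `‖L / 2‖ = ‖L‖` because `p` is odd.
-/

section SecondOrderError

open IsUltrametricDist

theorem norm_one_add_add_sq_sub_le {R : Type*} [SeminormedRing R] [IsUltrametricDist R]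
    {x e₁ e₂ : R} {δ : ℝ} (hδ : δ ≤ 1) (hx : ‖x‖ ≤ δ) (he₁ : ‖e₁‖ ≤ δ ^ 2)
    (he₂ : ‖e₂‖ ≤ δ ^ 2) :
    ‖(1 + x + e₁) ^ 2 - (1 + 2 * x + e₂)‖ ≤ δ ^ 2 := by
  have hδ0 : 0 ≤ δ := (norm_nonneg x).trans hx
  have hxe : ‖x + e₁‖ ≤ δ :=
    (norm_add_le_max x e₁).trans (max_le hx (he₁.trans (pow_le_of_le_one hδ0 hδ two_ne_zero)))
  have hsq : ‖(x + e₁) ^ 2‖ ≤ δ ^ 2 := (norm_pow_le' _ two_pos).trans (by gcongr)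
  have hdouble : ‖e₁ + e₁‖ ≤ δ ^ 2 := (norm_add_le_max e₁ e₁).trans (max_le he₁ he₁)
  have hneg : ‖-e₂‖ ≤ δ ^ 2 := by rwa [norm_neg]
  have hexpand : (1 + x + e₁) ^ 2 - (1 + 2 * x + e₂) = (x + e₁) ^ 2 + (e₁ + e₁) + -e₂ := by
    noncomm_ring
  rw [hexpand]
  exact (norm_add_le_max _ _).trans (max_le ((norm_add_le_max _ _).trans (max_le hsq hdouble)) hneg)

theorem norm_one_add_eq_one_of_norm_lt_one {R : Type*} [SeminormedRing R] [NormOneClass R]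
    [IsUltrametricDist R] {x : R} (hx : ‖x‖ < 1) : ‖1 + x‖ = 1 := by
  have hlt : ‖x‖ < ‖(1 : R)‖ := by rwa [norm_one]
  rw [norm_add_eq_max_of_norm_ne_norm hlt.ne', max_eq_left hlt.le, norm_one]

theorem norm_one_add_add_sq_sub_div_le {K : Type*} [NormedDivisionRing K] [IsUltrametricDist K]
    {x e₁ e₂ : K} {δ : ℝ} (hδ : δ < 1) (hx : ‖x‖ ≤ δ) (he₁ : ‖e₁‖ ≤ δ ^ 2)
    (he₂ : ‖e₂‖ ≤ δ ^ 2) :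
    ‖((1 + x + e₁) ^ 2 - (1 + 2 * x + e₂)) / (1 + x + e₁)‖ ≤ δ ^ 2 := by
  have hδ0 : 0 ≤ δ := (norm_nonneg x).trans hx
  have hxe : ‖x + e₁‖ < 1 := (norm_add_le_max x e₁).trans_lt
    (max_lt (hx.trans_lt hδ) (he₁.trans_lt (pow_lt_one₀ hδ0 hδ two_ne_zero)))
  have hunit : ‖1 + x + e₁‖ = 1 := by
    rw [add_assoc, norm_one_add_eq_one_of_norm_lt_one hxe]
  rw [norm_div, hunit, div_one]
  exact norm_one_add_add_sq_sub_le hδ.le hx he₁ he₂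

end SecondOrderError

theorem norm_eq_rpow_half_of_sq_eq_pow {K : Type*} [NormedDivisionRing K] {s π : K} {r : ℕ}
    (hs : s ^ 2 = π ^ r) : ‖s‖ = ‖π‖ ^ ((r : ℝ) / 2) := by
  calc ‖s‖ = √(‖π‖ ^ r) := by rw [← norm_pow, ← hs, norm_pow, Real.sqrt_sq (norm_nonneg s)]
    _ = ‖π‖ ^ ((r : ℝ) / 2) := by
      rw [Real.sqrt_eq_rpow, ← Real.rpow_natCast_mul (norm_nonneg π), mul_one_div]

section PadicCompatibility

variable {p : ℕ} [Fact p.Prime] {K : Type*} [NormedDivisionRing K]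

theorem norm_natCast_prime_of_padicNorm
    (hcompat : ∀ q : ℚ, ‖(q : K)‖ = ((padicNorm p q : ℚ) : ℝ)) : ‖(p : K)‖ = (p : ℝ)⁻¹ := by
  simpa only [Rat.cast_natCast, padicNorm.padicNorm_p_of_prime, Rat.cast_inv] using hcompat p

theorem norm_natCast_eq_one_iff_of_padicNorm
    (hcompat : ∀ q : ℚ, ‖(q : K)‖ = ((padicNorm p q : ℚ) : ℝ)) (n : ℕ) :
    ‖(n : K)‖ = 1 ↔ ¬ p ∣ n := by
  rw [← padicNorm.nat_eq_one_iff, ← Rat.cast_natCast, hcompat]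
  norm_cast

end PadicCompatibility

theorem zigzag_stmt_11_general {K : Type*} [NormedField K] [IsUltrametricDist K]
    (h2 : (2 : K) ≠ 0) {π : K} (hπ : π ≠ 0) {r : ℕ} {s : K} (hs : s ^ 2 = π ^ r)
    {L h e₁ e₂ : K} (he₁ : ‖e₁‖ ≤ ‖h‖ ^ 2) (he₂ : ‖e₂‖ ≤ ‖h‖ ^ 2)
    (hsmall : max 1 ‖L / 2‖ * ‖h‖ < 1)
    {a B : K} (ha : a = s * (1 + (L / 2) * h + e₁)) (hB : B = 1 + L * h + e₂) :
    ‖(a ^ 2 - B * π ^ r) / (π * a)‖ ≤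
      ‖π‖⁻¹ ^ ((1 : ℝ) - (r : ℝ) / 2) * (max 1 ‖L / 2‖) ^ 2 * ‖h‖ ^ 2 := by
  set δ : ℝ := max 1 ‖L / 2‖ * ‖h‖ with hδ
  set x : K := L / 2 * h with hx
  have hxδ : ‖x‖ ≤ δ := by
    rw [hx, norm_mul]
    exact mul_le_mul_of_nonneg_right (le_max_right _ _) (norm_nonneg h)
  have hhδ : ‖h‖ ^ 2 ≤ δ ^ 2 := pow_le_pow_left₀ (norm_nonneg h)
    (le_mul_of_one_le_left (norm_nonneg h) (le_max_left _ _)) 2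
  have hBx : B = 1 + 2 * x + e₂ := by rw [hB, hx]; field_simp
  have hs0 : s ≠ 0 := ne_zero_pow two_ne_zero (hs ▸ pow_ne_zero r hπ)
  have hquot : (a ^ 2 - B * π ^ r) / (π * a) =
      s / π * (((1 + x + e₁) ^ 2 - (1 + 2 * x + e₂)) / (1 + x + e₁)) := by
    rw [← hs, ha, hBx]
    field_simp
  have hscale : ‖s / π‖ = ‖π‖⁻¹ ^ ((1 : ℝ) - (r : ℝ) / 2) := by
    rw [norm_div, norm_eq_rpow_half_of_sq_eq_pow hs, ← Real.rpow_sub_one (norm_ne_zero_iff.2 hπ),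
      Real.inv_rpow (norm_nonneg π), ← Real.rpow_neg (norm_nonneg π), neg_sub]
  rw [hquot, norm_mul, hscale, mul_assoc _ (_ ^ 2), ← mul_pow, ← hδ]
  gcongr
  exact norm_one_add_add_sq_sub_div_le hsmall hxδ (he₁.trans hhδ) (he₂.trans hhδ)

/-- The degenerate case `L = H₋ + H₊` (`ν = ∞`) of the zig-zag parameter computation:
let `p` be an odd prime and `K` a characteristic-zero field with a multiplicative
nonarchimedean norm restricting to the `p`-adic absolute value on `ℚ`. Let `r₀ ≥ 1`,
`s² = p^{r₀}`, and let `L, h, e₁, e₂ ∈ K` with `‖e₁‖ ≤ ‖h‖²`, `‖e₂‖ ≤ ‖h‖²` and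
`max(1,‖L‖)·‖h‖ < 1`. For `a = s(1 + (L/2)h + e₁)` and `B = 1 + Lh + e₂`, one has
`‖(a² − B·p^{r₀})/(p·a)‖ ≤ p^{1 − r₀/2}·max(1,‖L‖)²·‖h‖²`. -/
theorem zigzag_stmt_11 (p : ℕ) (hp : p.Prime) (hodd : Odd p)
    {K : Type*} [NormedField K] [CharZero K] [IsUltrametricDist K]
    (hcompat : ∀ q : ℚ, ‖(q : K)‖ = ((padicNorm p q : ℚ) : ℝ))
    (r₀ : ℕ) (hr₀ : 1 ≤ r₀) (s : K) (hs : s ^ 2 = (p : K) ^ r₀)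
    (L h e₁ e₂ : K)
    (he₁ : ‖e₁‖ ≤ ‖h‖ ^ 2) (he₂ : ‖e₂‖ ≤ ‖h‖ ^ 2)
    (hsmall : max 1 ‖L‖ * ‖h‖ < 1)
    (a B : K) (ha : a = s * (1 + (L / 2) * h + e₁)) (hB : B = 1 + L * h + e₂) :
    ‖(a ^ 2 - B * (p : K) ^ r₀) / ((p : K) * a)‖ ≤
      (p : ℝ) ^ ((1 : ℝ) - (r₀ : ℝ) / 2) * (max 1 ‖L‖) ^ 2 * ‖h‖ ^ 2 := by
  have : Fact p.Prime := ⟨hp⟩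
  have hinv : ‖(p : K)‖⁻¹ = p := by rw [norm_natCast_prime_of_padicNorm hcompat, inv_inv]
  have hnorm_two : ‖(2 : K)‖ = 1 := (norm_natCast_eq_one_iff_of_padicNorm hcompat 2).2
    (hp.coprime_iff_not_dvd.1 (Nat.coprime_two_right.2 hodd))
  have hhalf : ‖L / 2‖ = ‖L‖ := by rw [norm_div, hnorm_two, div_one]
  simpa only [hinv, hhalf] using zigzag_stmt_11_general two_ne_zero
    (Nat.cast_ne_zero.2 hp.ne_zero) hs he₁ he₂ (hhalf.symm ▸ hsmall) ha hB
end

section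
/- Let p be an odd prime and let K be a characteristic-zero field with a multiplicative nonarchimedean norm ‖·‖ such that ‖q‖ equals the p-adic absolute value of q for every rational number q (viewed in K). Let r₀ ≥ 1 be an integer and let s ∈ K satisfy s² = p^{r₀}. Let L, H, h, e₁, e₂ ∈ K with h ≠ 0, L ≠ H, ‖H‖ ≤ 1, ‖e₁‖ ≤ ‖h‖², ‖e₂‖ ≤ ‖h‖², and max(1, ‖L‖)²·‖h‖ < ‖L − H‖. Set a = s·(1 + (L/2)·h + e₁), B = 1 + H·h + e₂, and c = (a² − B·p^{r₀})/(p·a). Then ‖c/h − (s/p)·(L − H)‖ < p^{1 − r₀/2}·‖L − H‖. -/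
/-!
Put `a = s * u` with `u = 1 + w` and `w = L / 2 * h + e₁`. Replacing `p ^ r₀` by `s ^ 2` gives
`c = (s / p) * ((u ^ 2 - B) / u)`, and

`u ^ 2 - B = u * (h * (L - H)) + (2 * e₁ - e₂ + w * (w - h * (L - H)))`.

For `M = max 1 ‖L‖`, both `w` and `h * (L - H)` have norm at most `M * ‖h‖ < 1`, so `u` has norm `1`
and the last summand has norm at most `(M * ‖h‖) ^ 2`. Dividing by `u * h` leaves an error of norm
at most `M ^ 2 * ‖h‖ < ‖L - H‖`.
-/

section PadicNorm

variable {K : Type*} [NormedDivisionRing K] {p : ℕ}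

theorem norm_natCast_eq_one_of_coprime (hp : p.Prime)
    (hcompat : ∀ q : ℚ, ‖(q : K)‖ = ((padicNorm p q : ℚ) : ℝ)) {n : ℕ} (hn : p.Coprime n) :
    ‖(n : K)‖ = 1 := by
  have : Fact p.Prime := ⟨hp⟩
  simpa [(padicNorm.nat_eq_one_iff n).mpr (hp.coprime_iff_not_dvd.mp hn)] using hcompat n

theorem norm_eq_rpow_div_two_of_sq_eq_pow {s t : K} {r : ℕ} (hs : s ^ 2 = t ^ r) :
    ‖s‖ = ‖t‖ ^ ((r : ℝ) / 2) := by
  rw [Real.rpow_div_two_eq_sqrt _ (norm_nonneg t), Real.rpow_natCast,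
    ← sq_eq_sq₀ (norm_nonneg s) (by positivity), ← pow_mul, mul_comm r, pow_mul,
    Real.sq_sqrt (norm_nonneg t), ← norm_pow, ← norm_pow, hs]

theorem norm_div_natCast_eq_rpow (hp : p.Prime)
    (hcompat : ∀ q : ℚ, ‖(q : K)‖ = ((padicNorm p q : ℚ) : ℝ)) {s : K} {r : ℕ}
    (hs : s ^ 2 = (p : K) ^ r) : ‖s / (p : K)‖ = (p : ℝ) ^ ((1 : ℝ) - (r : ℝ) / 2) := by
  have hp₀ : (0 : ℝ) < p := mod_cast hp.pos
  have hnorm : ‖(p : K)‖ = (p : ℝ)⁻¹ := by simpa [padicNorm.padicNorm_p hp.one_lt] using hcompat p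
  rw [norm_div, norm_eq_rpow_div_two_of_sq_eq_pow hs, hnorm, Real.inv_rpow hp₀.le,
    Real.rpow_sub hp₀, Real.rpow_one, div_inv_eq_mul, inv_mul_eq_div]

end PadicNorm

section Ultrametric

theorem norm_sub_le_of_norm_le {E : Type*} [SeminormedAddGroup E] [IsUltrametricDist E]
    {x y : E} {b : ℝ} (hx : ‖x‖ ≤ b) (hy : ‖y‖ ≤ b) : ‖x - y‖ ≤ b := by
  rw [sub_eq_add_neg]
  exact (IsUltrametricDist.norm_add_le_max x (-y)).trans (max_le hx (norm_neg y ▸ hy))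

theorem norm_one_add_eq_one {R : Type*} [SeminormedRing R] [NormOneClass R] [IsUltrametricDist R]
    {w : R} (hw : ‖w‖ < 1) : ‖1 + w‖ = 1 := by
  have hlt : ‖w‖ < ‖(1 : R)‖ := by rwa [norm_one]
  rw [IsUltrametricDist.norm_add_eq_max_of_norm_ne_norm hlt.ne', max_eq_left hlt.le, norm_one]

theorem norm_second_order_remainder_le {R : Type*} [SeminormedRing R] [NormOneClass R]
    [IsUltrametricDist R] {w d e₁ e₂ : R} {δ : ℝ} (hw : ‖w‖ ≤ δ) (hd : ‖d‖ ≤ δ)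
    (he₁ : ‖e₁‖ ≤ δ ^ 2) (he₂ : ‖e₂‖ ≤ δ ^ 2) :
    ‖2 * e₁ - e₂ + w * (w - d)‖ ≤ δ ^ 2 := by
  have htwo : ‖2 * e₁‖ ≤ δ ^ 2 :=
    calc ‖2 * e₁‖ ≤ ‖(2 : R)‖ * ‖e₁‖ := norm_mul_le _ _
      _ ≤ 1 * δ ^ 2 := by
        gcongr
        exact_mod_cast IsUltrametricDist.norm_natCast_le_one R 2
      _ = δ ^ 2 := one_mul _
  have hquad : ‖w * (w - d)‖ ≤ δ ^ 2 :=
    calc ‖w * (w - d)‖ ≤ ‖w‖ * ‖w - d‖ := norm_mul_le _ _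
      _ ≤ δ * δ := by
        have := (norm_nonneg w).trans hw
        gcongr
        exact norm_sub_le_of_norm_le hw hd
      _ = δ ^ 2 := (sq δ).symm
  exact (IsUltrametricDist.norm_add_le_max _ _).trans
    (max_le (norm_sub_le_of_norm_le htwo he₂) hquad)

variable {K : Type*} [NormedField K] [IsUltrametricDist K] {L H h e₁ e₂ : K} {M : ℝ}

theorem norm_div_two_mul_add_le (h2 : ‖(2 : K)‖ = 1) (hL : ‖L‖ ≤ M) (hMh : M * ‖h‖ ≤ 1)
    (he₁ : ‖e₁‖ ≤ (M * ‖h‖) ^ 2) : ‖L / 2 * h + e₁‖ ≤ M * ‖h‖ := by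
  have hM : 0 ≤ M := (norm_nonneg L).trans hL
  refine (IsUltrametricDist.norm_add_le_max _ _).trans (max_le ?_ (he₁.trans ?_))
  · rw [norm_mul, norm_div, h2, div_one]
    gcongr
  · exact pow_le_of_le_one (by positivity) hMh two_ne_zero

theorem norm_sq_sub_div_sub_le (h2 : ‖(2 : K)‖ = 1) (hh : h ≠ 0) (hL : ‖L‖ ≤ M) (hH : ‖H‖ ≤ M)
    (hMh : M * ‖h‖ < 1) (he₁ : ‖e₁‖ ≤ (M * ‖h‖) ^ 2) (he₂ : ‖e₂‖ ≤ (M * ‖h‖) ^ 2)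
    {u : K} (hu : u = 1 + L / 2 * h + e₁) :
    ‖(u ^ 2 - (1 + H * h + e₂)) / (u * h) - (L - H)‖ ≤ M ^ 2 * ‖h‖ := by
  have h2₀ : (2 : K) ≠ 0 := norm_ne_zero_iff.mp (h2 ▸ one_ne_zero)
  have hw : ‖L / 2 * h + e₁‖ ≤ M * ‖h‖ := norm_div_two_mul_add_le h2 hL hMh.le he₁
  have hd : ‖(L - H) * h‖ ≤ M * ‖h‖ := by
    rw [norm_mul]
    gcongr
    exact norm_sub_le_of_norm_le hL hH
  have hu₁ : ‖u‖ = 1 := by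
    rw [hu, add_assoc]
    exact norm_one_add_eq_one (hw.trans_lt hMh)
  have hu₀ : u ≠ 0 := norm_ne_zero_iff.mp (hu₁ ▸ one_ne_zero)
  have hexpand : (u ^ 2 - (1 + H * h + e₂)) / (u * h) - (L - H) =
      (2 * e₁ - e₂ + (L / 2 * h + e₁) * (L / 2 * h + e₁ - (L - H) * h)) / (u * h) := by
    rw [div_sub' (mul_ne_zero hu₀ hh), hu]
    congr 1
    field_simp
    ring
  rw [hexpand, norm_div, norm_mul, hu₁, one_mul, div_le_iff₀ (norm_pos_iff.mpr hh)]
  calc _ ≤ (M * ‖h‖) ^ 2 := norm_second_order_remainder_le hw hd he₁ he₂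
    _ = M ^ 2 * ‖h‖ * ‖h‖ := by ring

end Ultrametric

theorem zigzag_stmt_12_general {K : Type*} [NormedField K] [IsUltrametricDist K]
    (h2 : ‖(2 : K)‖ = 1) {ϖ s L H h e₁ e₂ a B c : K} (hs : s ≠ 0) (hϖ : ϖ ≠ 0) (hh : h ≠ 0)
    (hH : ‖H‖ ≤ max 1 ‖L‖) (he₁ : ‖e₁‖ ≤ ‖h‖ ^ 2) (he₂ : ‖e₂‖ ≤ ‖h‖ ^ 2)
    (hsmall : (max 1 ‖L‖) ^ 2 * ‖h‖ < ‖L - H‖)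
    (ha : a = s * (1 + (L / 2) * h + e₁)) (hB : B = 1 + H * h + e₂)
    (hc : c = (a ^ 2 - B * s ^ 2) / (ϖ * a)) :
    ‖c / h - (s / ϖ) * (L - H)‖ < ‖s / ϖ‖ * ‖L - H‖ := by
  set M := max 1 ‖L‖
  have hM : 1 ≤ M := le_max_left _ _
  have hL : ‖L‖ ≤ M := le_max_right _ _
  have hMh : M * ‖h‖ < 1 := by
    refine lt_of_mul_lt_mul_left ?_ (zero_le_one.trans hM)
    calc M * (M * ‖h‖) = M ^ 2 * ‖h‖ := by ring
      _ < ‖L - H‖ := hsmall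
      _ ≤ M * 1 := by simpa using norm_sub_le_of_norm_le hL hH
  have hsq : ‖h‖ ^ 2 ≤ (M * ‖h‖) ^ 2 := by
    gcongr
    exact le_mul_of_one_le_left (norm_nonneg h) hM
  have hfactor : c / h - s / ϖ * (L - H) = s / ϖ *
      (((1 + L / 2 * h + e₁) ^ 2 - (1 + H * h + e₂)) / ((1 + L / 2 * h + e₁) * h) - (L - H)) := by
    rw [hc, ha, hB]
    generalize 1 + L / 2 * h + e₁ = u
    field_simp
  rw [hfactor, norm_mul]
  gcongr
  · exact norm_pos_iff.mpr (div_ne_zero hs hϖ)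
  · exact (norm_sq_sub_div_sub_le h2 hh hL hH hMh (he₁.trans hsq) (he₂.trans hsq) rfl).trans_lt
      hsmall

/-- Identification of the leading unit of `c/h`: with the hypotheses of the generic-case
valuation computation (odd prime `p`, characteristic-zero field `K` with multiplicative
nonarchimedean norm restricting to the `p`-adic absolute value on `ℚ`, `r₀ ≥ 1`,
`s² = p^{r₀}`, `h ≠ 0`, `L ≠ H`, `‖H‖ ≤ 1`, `‖e₁‖ ≤ ‖h‖²`, `‖e₂‖ ≤ ‖h‖²`,
`max(1,‖L‖)²·‖h‖ < ‖L − H‖`), setting `a = s(1 + (L/2)h + e₁)`, `B = 1 + Hh + e₂` and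
`c = (a² − B·p^{r₀})/(p·a)`, one has `‖c/h − (s/p)(L − H)‖ < p^{1 − r₀/2}·‖L − H‖`. -/
theorem zigzag_stmt_12 (p : ℕ) (hp : p.Prime) (hodd : Odd p)
    {K : Type*} [NormedField K] [CharZero K] [IsUltrametricDist K]
    (hcompat : ∀ q : ℚ, ‖(q : K)‖ = ((padicNorm p q : ℚ) : ℝ))
    (r₀ : ℕ) (hr₀ : 1 ≤ r₀) (s : K) (hs : s ^ 2 = (p : K) ^ r₀)
    (L H h e₁ e₂ : K) (hh : h ≠ 0) (hLH : L ≠ H) (hH : ‖H‖ ≤ 1)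
    (he₁ : ‖e₁‖ ≤ ‖h‖ ^ 2) (he₂ : ‖e₂‖ ≤ ‖h‖ ^ 2)
    (hsmall : (max 1 ‖L‖) ^ 2 * ‖h‖ < ‖L - H‖)
    (a B c : K) (ha : a = s * (1 + (L / 2) * h + e₁)) (hB : B = 1 + H * h + e₂)
    (hc : c = (a ^ 2 - B * (p : K) ^ r₀) / ((p : K) * a)) :
    ‖c / h - (s / (p : K)) * (L - H)‖ < (p : ℝ) ^ ((1 : ℝ) - (r₀ : ℝ) / 2) * ‖L - H‖ := by
  have hpK : (p : K) ≠ 0 := Nat.cast_ne_zero.mpr hp.ne_zero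
  have hs₀ : s ≠ 0 := ne_zero_pow two_ne_zero (hs ▸ pow_ne_zero r₀ hpK)
  rw [← norm_div_natCast_eq_rpow hp hcompat hs]
  exact zigzag_stmt_12_general (norm_natCast_eq_one_of_coprime hp hcompat hodd.coprime_two_right)
    hs₀ hpK hh (hH.trans (le_max_left _ _)) he₁ he₂ hsmall ha hB (hs ▸ hc)
end
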